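/- Let a ≥ 2, b ≥ 1, k ≥ 1, and l_1, …, l_k ≥ 1 be integers, and suppose there is an assignment of elements α_{i,j} ∈ {y_1, …, y_b, u_1, …, u_b} (for 1 ≤ i ≤ l_j, 1 ≤ j ≤ k) whose set of values is exactly {y_q, u_q : 1 ≤ q ≤ b}. Then there exists an I-isolated (in particular, F-isolated) smooth Fano polytope P of dimension n = a + 2b − 1 + Σ_{j=1}^k l_j with n + k + 3 vertices V(P) = {v_1,…,v_a, y_1,…,y_b, z, t, u_1,…,u_b} ∪ {w_{1,j},…,w_{l_j+1,j} : 1 ≤ j ≤ k} whose primitive relations are exactly: v_1+⋯+v_a+y_1+⋯+y_b = (a+b−1)t; y_1+⋯+y_b+z = u_1+⋯+u_b; z+t = 0; t+u_1+⋯+u_b = y_1+⋯+y_b; u_1+⋯+u_b+v_1+⋯+v_a = (a+b−2)t; and, for each 1 ≤ j ≤ k, w_{1,j}+⋯+w_{l_j+1,j} = α_{1,j}+⋯+α_{l_j,j}. -/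

import Mathlib

/-! ## Basic definitions: lattice polytopes, smooth Fano polytopes,
unimodular equivalence, F- and I-equivalence, primitive collections. -/

/-- A point of `ℝ^n` all of whose coordinates are integers. -/
def IsLatticePoint {n : ℕ} (x : Fin n → ℝ) : Prop := ∀ i, ∃ m : ℤ, x i = (m : ℝ)

/-- The vertex set of a polytope: its extreme points. -/
def vertexSet {n : ℕ} (P : Set (Fin n → ℝ)) : Set (Fin n → ℝ) :=
  Set.extremePoints ℝ P

/-- A lattice `n`-polytope: the convex hull of finitely many lattice points,
of full dimension `n`. -/
def IsLatticePolytope {n : ℕ} (P : Set (Fin n → ℝ)) : Prop :=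
  (∃ S : Finset (Fin n → ℝ), (∀ x ∈ S, IsLatticePoint x) ∧
    P = convexHull ℝ (S : Set (Fin n → ℝ))) ∧
  affineSpan ℝ P = ⊤

/-- A face of `P`: an exposed subset of `P`. -/
def IsFaceOf {n : ℕ} (F P : Set (Fin n → ℝ)) : Prop := IsExposed ℝ P F

/-- A facet of `P`: a face of affine dimension `n - 1`. -/
def IsFacetOf {n : ℕ} (F P : Set (Fin n → ℝ)) : Prop :=
  IsFaceOf F P ∧ Module.finrank ℝ (vectorSpan ℝ F) + 1 = n

/-- A set `S` of points of `ℝ^n` forms a `ℤ`-basis of `ℤ^n`: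
it consists of `n` lattice points whose matrix has determinant `±1`. -/
def IsUnimodularBasis {n : ℕ} (S : Set (Fin n → ℝ)) : Prop :=
  ∃ b : Fin n → (Fin n → ℝ), Function.Injective b ∧ Set.range b = S ∧
    (∀ i, IsLatticePoint (b i)) ∧ |(Matrix.of b).det| = 1

/-- A smooth Fano `n`-polytope: a lattice `n`-polytope with the origin in its
interior such that the vertex set of every facet is a `ℤ`-basis of `ℤ^n`. -/
def IsSmoothFano {n : ℕ} (P : Set (Fin n → ℝ)) : Prop :=
  IsLatticePolytope P ∧ (0 : Fin n → ℝ) ∈ interior P ∧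
    ∀ F : Set (Fin n → ℝ), IsFacetOf F P → IsUnimodularBasis (vertexSet P ∩ F)

/-- Two subsets of `ℝ^n` are unimodularly equivalent if an affine map of `ℝ^n`
mapping `ℤ^n` onto `ℤ^n` maps one onto the other. -/
def UnimodularEquiv {n : ℕ} (Q Q' : Set (Fin n → ℝ)) : Prop :=
  ∃ φ : (Fin n → ℝ) →ᵃ[ℝ] (Fin n → ℝ),
    φ '' {x | IsLatticePoint x} = {x | IsLatticePoint x} ∧ φ '' Q = Q'

/-- One step of an I-sequence: the vertex set of one polytope is obtained from
the vertex set of the other by adding one new lattice point. -/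
def IStep {n : ℕ} (P Q : Set (Fin n → ℝ)) : Prop :=
  (∃ w : Fin n → ℝ, IsLatticePoint w ∧ w ∉ vertexSet P ∧
    vertexSet Q = vertexSet P ∪ {w}) ∨
  (∃ w : Fin n → ℝ, IsLatticePoint w ∧ w ∉ vertexSet Q ∧
    vertexSet P = vertexSet Q ∪ {w})

/-- I-equivalence of smooth Fano `n`-polytopes. -/
def IEquiv {n : ℕ} (P Q : Set (Fin n → ℝ)) : Prop :=
  ∃ (k : ℕ) (c : Fin (k + 1) → Set (Fin n → ℝ)),
    (∀ i, IsSmoothFano (c i)) ∧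
    UnimodularEquiv P (c 0) ∧ UnimodularEquiv Q (c (Fin.last k)) ∧
    ∀ i : Fin k, IStep (c i.castSucc) (c i.succ)

/-- `Q` is the stellar subdivision of `P` at the new vertex `w`: `w` is the sum
of the vertices of a proper face `F` of `P`, and the facets of `Q` containing
`w` are exactly the sets `conv({w} ∪ (V(F') \ {v}))` for `F'` a facet of `P`
containing `F` and `v` a vertex of `F`. -/
def IsStellarSubdivisionAt {n : ℕ} (P Q : Set (Fin n → ℝ)) (w : Fin n → ℝ) : Prop :=
  ∃ F : Set (Fin n → ℝ), IsFaceOf F P ∧ F.Nonempty ∧ F ≠ P ∧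
    w = ∑ᶠ v ∈ vertexSet P ∩ F, v ∧
    {G : Set (Fin n → ℝ) | IsFacetOf G Q ∧ w ∈ G} =
      {G : Set (Fin n → ℝ) | ∃ F' v, IsFacetOf F' P ∧ F ⊆ F' ∧
        v ∈ vertexSet P ∩ F ∧
        G = convexHull ℝ (insert w ((vertexSet P ∩ F') \ {v}))}

/-- One step of an F-sequence: an I-step which moreover is a stellar
subdivision (or its inverse). -/
def FStep {n : ℕ} (P Q : Set (Fin n → ℝ)) : Prop :=
  (∃ w : Fin n → ℝ, IsLatticePoint w ∧ w ∉ vertexSet P ∧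
    vertexSet Q = vertexSet P ∪ {w} ∧ IsStellarSubdivisionAt P Q w) ∨
  (∃ w : Fin n → ℝ, IsLatticePoint w ∧ w ∉ vertexSet Q ∧
    vertexSet P = vertexSet Q ∪ {w} ∧ IsStellarSubdivisionAt Q P w)

/-- F-equivalence of smooth Fano `n`-polytopes. -/
def FEquiv {n : ℕ} (P Q : Set (Fin n → ℝ)) : Prop :=
  ∃ (k : ℕ) (c : Fin (k + 1) → Set (Fin n → ℝ)),
    (∀ i, IsSmoothFano (c i)) ∧
    UnimodularEquiv P (c 0) ∧ UnimodularEquiv Q (c (Fin.last k)) ∧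
    ∀ i : Fin k, FStep (c i.castSucc) (c i.succ)

/-- A smooth Fano polytope is F-isolated if every smooth Fano polytope
F-equivalent to it is unimodularly equivalent to it. -/
def FIsolated {n : ℕ} (P : Set (Fin n → ℝ)) : Prop :=
  ∀ Q : Set (Fin n → ℝ), IsSmoothFano Q → FEquiv Q P → UnimodularEquiv Q P

/-- A smooth Fano polytope is I-isolated if every smooth Fano polytope
I-equivalent to it is unimodularly equivalent to it. -/
def IIsolated {n : ℕ} (P : Set (Fin n → ℝ)) : Prop :=
  ∀ Q : Set (Fin n → ℝ), IsSmoothFano Q → IEquiv Q P → UnimodularEquiv Q P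

/-- A primitive collection of a smooth Fano polytope `P`: a nonempty set `A` of
vertices such that `conv(A)` is not a face of `P` but `conv(A \ {x})` is a face
of `P` for every `x ∈ A`. -/
def IsPrimitiveCollection {n : ℕ} (P A : Set (Fin n → ℝ)) : Prop :=
  A.Nonempty ∧ A ⊆ vertexSet P ∧ ¬ IsFaceOf (convexHull ℝ A) P ∧
    ∀ x ∈ A, IsFaceOf (convexHull ℝ (A \ {x})) P

/-- The standard basis vector `e_i` of `ℝ^n`. -/
def stdBasis {n : ℕ} (i : Fin n) : Fin n → ℝ := fun q => if q = i then 1 else 0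

/-- The polytope `T^n = conv{e_1, …, e_n, -(e_1 + ⋯ + e_n)}`,
corresponding to projective `n`-space. -/
def Tpoly (n : ℕ) : Set (Fin n → ℝ) :=
  convexHull ℝ (Set.range (stdBasis (n := n)) ∪ {fun _ => (-1 : ℝ)})

/-- `P` has the vertex labeling
`v_1, …, v_a, y_1, …, y_b, z, t, u_1, …, u_b, w_{i,j} (1 ≤ i ≤ l_j + 1, 1 ≤ j ≤ k)`
and its primitive collections and primitive relations are exactly:
`v_1+⋯+v_a+y_1+⋯+y_b = (a+b-1)t`; `y_1+⋯+y_b+z = u_1+⋯+u_b`; `z+t = 0`;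
`t+u_1+⋯+u_b = y_1+⋯+y_b`; `u_1+⋯+u_b+v_1+⋯+v_a = (a+b-2)t`; and
`w_{1,j}+⋯+w_{l_j+1,j} = α_{1,j}+⋯+α_{l_j,j}` for `1 ≤ j ≤ k`, where
`A j i` is the vertex among the `y`'s and `u`'s named by `α_{i,j}`. -/
def HasGeneralStructure {n : ℕ} (P : Set (Fin n → ℝ)) (a b k : ℕ) (l : Fin k → ℕ)
    (v : Fin a → Fin n → ℝ) (y : Fin b → Fin n → ℝ) (z t : Fin n → ℝ)
    (u : Fin b → Fin n → ℝ) (w : (j : Fin k) → Fin (l j + 1) → Fin n → ℝ)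
    (A : (j : Fin k) → Fin (l j) → Fin n → ℝ) : Prop :=
  vertexSet P =
    Set.range v ∪ Set.range y ∪ {z, t} ∪ Set.range u ∪ ⋃ j, Set.range (w j) ∧
  (∀ B : Set (Fin n → ℝ), IsPrimitiveCollection P B ↔
    (B = Set.range v ∪ Set.range y ∨ B = Set.range y ∪ {z} ∨ B = {z, t} ∨
     B = insert t (Set.range u) ∨ B = Set.range u ∪ Set.range v ∨
     ∃ j : Fin k, B = Set.range (w j))) ∧
  (∑ i, v i) + (∑ j, y j) = ((a : ℝ) + (b : ℝ) - 1) • t ∧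
  (∑ j, y j) + z = (∑ j, u j) ∧
  z + t = 0 ∧
  t + (∑ j, u j) = (∑ j, y j) ∧
  (∑ j, u j) + (∑ i, v i) = ((a : ℝ) + (b : ℝ) - 2) • t ∧
  ∀ j : Fin k, (∑ i, w j i) = (∑ i, A j i)

section Polytopes

variable {n : ℕ}

/-- A linear functional taking integer values on the lattice. -/
def LatticeIntegral (f : (Fin n → ℝ) →ₗ[ℝ] ℝ) : Prop :=
  ∀ x, IsLatticePoint x → ∃ m : ℤ, f x = m

theorem isLatticePoint_zero : IsLatticePoint (0 : Fin n → ℝ) := fun _ => ⟨0, by simp⟩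

theorem isLatticePoint_single (i : Fin n) : IsLatticePoint (Pi.single i (1 : ℝ)) := by
  intro j
  rcases eq_or_ne j i with rfl | h
  · exact ⟨1, by simp⟩
  · exact ⟨0, by simp [h]⟩

theorem exists_dual_of_isUnimodularBasis {S : Set (Fin n → ℝ)} (hS : IsUnimodularBasis S) :
    ∃ b : Fin n → Fin n → ℝ, Function.Injective b ∧ Set.range b = S ∧
      ∃ g : Fin n → ((Fin n → ℝ) →ₗ[ℝ] ℝ), (∀ i, LatticeIntegral (g i)) ∧
        (∀ i j, g i (b j) = if i = j then 1 else 0) ∧ ∀ x, x = ∑ i, g i x • b i := by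
  obtain ⟨b, hb, hr, hl, hd⟩ := hS
  refine ⟨b, hb, hr, ?_⟩
  choose m hm using hl
  set M : Matrix (Fin n) (Fin n) ℤ := Matrix.of m with hM
  have hMb : Matrix.of b = M.map (Int.cast : ℤ → ℝ) := by
    ext i j
    simp [hM, hm]
  have hdet : (Matrix.of b).det = (M.det : ℝ) := by
    rw [hMb]
    exact (Int.cast_det M).symm
  have hunit : IsUnit M.det := by
    rw [hdet, ← Int.cast_abs] at hd
    exact Int.isUnit_iff_abs_eq.2 (by exact_mod_cast hd)
  have h1 : M * M⁻¹ = 1 := Matrix.mul_nonsing_inv _ hunit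
  have h2 : M⁻¹ * M = 1 := Matrix.nonsing_inv_mul _ hunit
  have e1 : ∀ i j, ∑ k, b i k * ((M⁻¹ k j : ℤ) : ℝ) = if i = j then 1 else 0 := by
    intro i j
    have := congrFun (congrFun h1 i) j
    rw [Matrix.mul_apply, Matrix.one_apply] at this
    have h := congrArg (Int.cast : ℤ → ℝ) this
    push_cast at h
    rw [← h]
    exact Finset.sum_congr rfl fun k _ => by rw [hm]; rfl
  have e2 : ∀ i j, ∑ k, ((M⁻¹ i k : ℤ) : ℝ) * b k j = if i = j then 1 else 0 := by
    intro i j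
    have := congrFun (congrFun h2 i) j
    rw [Matrix.mul_apply, Matrix.one_apply] at this
    have h := congrArg (Int.cast : ℤ → ℝ) this
    push_cast at h
    rw [← h]
    exact Finset.sum_congr rfl fun k _ => by rw [hm]; rfl
  refine ⟨fun i => ∑ k, ((M⁻¹ k i : ℤ) : ℝ) • LinearMap.proj k, ?_, ?_, ?_⟩
  · intro i x hx
    choose c hc using hx
    exact ⟨∑ k, M⁻¹ k i * c k, by simp [hc]⟩
  · intro i j
    simp only [LinearMap.sum_apply, LinearMap.smul_apply, LinearMap.proj_apply, smul_eq_mul]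
    simp_rw [mul_comm _ (b j _)]
    rw [e1]
    exact if_congr eq_comm rfl rfl
  · intro x
    ext j
    simp only [LinearMap.sum_apply, LinearMap.smul_apply, LinearMap.proj_apply, smul_eq_mul,
      Finset.sum_apply, Pi.smul_apply, Finset.sum_mul]
    rw [Finset.sum_comm]
    have : ∀ k, ∑ i, ((M⁻¹ k i : ℤ) : ℝ) * x k * b i j = x k * if k = j then 1 else 0 := by
      intro k
      rw [← e2, Finset.mul_sum]
      exact Finset.sum_congr rfl fun i _ => by ring
    simp [this]

theorem isUnimodularBasis_range_of_dual (b : Fin n → Fin n → ℝ) (hl : ∀ i, IsLatticePoint (b i))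
    (g : Fin n → ((Fin n → ℝ) →ₗ[ℝ] ℝ)) (hg : ∀ i, LatticeIntegral (g i))
    (hgb : ∀ i j, g i (b j) = if i = j then 1 else 0) : IsUnimodularBasis (Set.range b) := by
  refine ⟨b, ?_, rfl, hl, ?_⟩
  · intro i j hij
    by_contra h
    have h1 := hgb i i
    rw [hij, hgb i j] at h1
    simp [h] at h1
  choose m hm using hl
  have hG : ∀ i k, ∃ c : ℤ, g i (Pi.single k 1) = c := fun i k => hg i _ (isLatticePoint_single k)
  choose c hc using hG
  set M : Matrix (Fin n) (Fin n) ℤ := Matrix.of m with hM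
  set G : Matrix (Fin n) (Fin n) ℤ := Matrix.of fun k i => c i k with hGdef
  have hMG : M * G = 1 := by
    ext i j
    rw [Matrix.mul_apply, Matrix.one_apply]
    have h := hgb j i
    rw [LinearMap.pi_apply_eq_sum_univ] at h
    have h' : ∀ k, g j (fun q => if k = q then 1 else 0) = c j k := by
      intro k
      rw [← hc]
      congr 1
      ext q
      simp [Pi.single_apply, eq_comm]
    simp only [h', hm, smul_eq_mul] at h
    have : ((∑ k, M i k * G k j : ℤ) : ℝ) = ((if i = j then 1 else 0 : ℤ) : ℝ) := by
      push_cast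
      exact h.trans (if_congr eq_comm rfl rfl)
    exact_mod_cast this
  have hdet : (Matrix.of b).det = (M.det : ℝ) := by
    rw [Int.cast_det]
    congr 1
    ext i j
    simp [hM, hm]
  have hu : IsUnit M.det := by
    have := congrArg Matrix.det hMG
    rw [Matrix.det_mul, Matrix.det_one] at this
    exact IsUnit.of_mul_eq_one _ this
  rw [hdet, ← Int.cast_abs, Int.isUnit_iff_abs_eq.1 hu]
  simp

theorem IsSmoothFano.finite_vertexSet {Q : Set (Fin n → ℝ)} (hQ : IsSmoothFano Q) :
    (vertexSet Q).Finite := by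
  obtain ⟨S, -, rfl⟩ := hQ.1.1
  exact S.finite_toSet.subset extremePoints_convexHull_subset

theorem IsSmoothFano.convexHull_vertexSet {Q : Set (Fin n → ℝ)} (hQ : IsSmoothFano Q) :
    convexHull ℝ (vertexSet Q) = Q := by
  have hfin := hQ.finite_vertexSet
  obtain ⟨S, -, hS⟩ := hQ.1.1
  have hc : IsCompact Q := hS ▸ S.finite_toSet.isCompact_convexHull ℝ
  have hv : Convex ℝ Q := hS ▸ convex_convexHull ℝ _
  have h := closure_convexHull_extremePoints hc hv
  exact (hfin.isCompact_convexHull ℝ).isClosed.closure_eq.symm.trans h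

theorem IsSmoothFano.le_of_vertexSet {Q : Set (Fin n → ℝ)} (hQ : IsSmoothFano Q)
    {f : (Fin n → ℝ) →ₗ[ℝ] ℝ} {r : ℝ} (h : ∀ x ∈ vertexSet Q, f x ≤ r) {x : Fin n → ℝ}
    (hx : x ∈ Q) : f x ≤ r := by
  rw [← hQ.convexHull_vertexSet] at hx
  exact convexHull_min (t := {x | f x ≤ r}) h (convex_halfSpace_le f.isLinear r) hx

/-- A linear functional bounded above by zero on a neighbourhood of the origin vanishes. -/
theorem linearMap_eq_zero_of_nonpos {Q : Set (Fin n → ℝ)} (h0 : (0 : Fin n → ℝ) ∈ interior Q)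
    {f : (Fin n → ℝ) →ₗ[ℝ] ℝ} (h : ∀ x ∈ Q, f x ≤ 0) : f = 0 := by
  have key : ∀ x, f x ≤ 0 := by
    intro x
    have ht : Filter.Tendsto (fun s : ℝ => s • x) (nhds 0) (nhds 0) := by
      have : Continuous fun s : ℝ => s • x := by fun_prop
      simpa using this.tendsto 0
    have hev := ht.eventually (mem_interior_iff_mem_nhds.1 h0)
    obtain ⟨ε, hε, hb⟩ := Metric.eventually_nhds_iff.1 hev
    have hm := h _ (hb (y := ε / 2) (by
      rw [Real.dist_eq, sub_zero, abs_of_pos (by linarith)]; linarith))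
    rw [map_smul, smul_eq_mul] at hm
    by_contra hx
    push Not at hx
    have := mul_pos (half_pos hε) hx
    linarith
  ext1 i
  ext
  have h1 := key (Pi.single i 1)
  have h2 := key (-Pi.single i 1)
  rw [map_neg] at h2
  simp only [LinearMap.comp_apply, LinearMap.single_apply, LinearMap.zero_apply]
  linarith

theorem IsSmoothFano.eq_zero_of_vertexSet {Q : Set (Fin n → ℝ)} (hQ : IsSmoothFano Q)
    {f : (Fin n → ℝ) →ₗ[ℝ] ℝ} (h : ∀ x ∈ vertexSet Q, 0 ≤ f x) : f = 0 := by
  have : -f = 0 := linearMap_eq_zero_of_nonpos hQ.2.1 fun x hx =>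
    hQ.le_of_vertexSet (f := -f) (by simpa using h) hx
  simpa using this

theorem IsSmoothFano.zero_notMem_vertexSet {Q : Set (Fin n → ℝ)} (hQ : IsSmoothFano Q)
    (hn : 0 < n) : (0 : Fin n → ℝ) ∉ vertexSet Q := by
  intro h0
  have ht : Filter.Tendsto (fun s : ℝ => s • (Pi.single ⟨0, hn⟩ 1 : Fin n → ℝ))
      (nhds 0) (nhds 0) := by
    have : Continuous fun s : ℝ => s • (Pi.single ⟨0, hn⟩ 1 : Fin n → ℝ) := by fun_prop
    simpa using this.tendsto 0
  have hev := ht.eventually (mem_interior_iff_mem_nhds.1 hQ.2.1)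
  obtain ⟨ε, hε, hb⟩ := Metric.eventually_nhds_iff.1 hev
  have h1 := hb (y := ε / 2) (by
    rw [Real.dist_eq, sub_zero, abs_of_pos (by linarith)]; linarith)
  have h2 := hb (y := -(ε / 2)) (by
    rw [Real.dist_eq, sub_zero, abs_neg, abs_of_pos (by linarith)]; linarith)
  have h3 := (mem_extremePoints_iff_left.1 h0).2 _ h1 _ h2
    ⟨1 / 2, 1 / 2, by norm_num, by norm_num, by norm_num, by simp⟩
  have h4 := congrFun h3 ⟨0, hn⟩
  simp at h4
  linarith

theorem span_eq_top_of_sep {S : Set (Fin n → ℝ)}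
    (hsep : ∀ g : (Fin n → ℝ) →ₗ[ℝ] ℝ, (∀ x ∈ S, g x = 0) → g = 0) :
    Submodule.span ℝ S = ⊤ := by
  by_contra h
  obtain ⟨g, hg, hle⟩ := Submodule.exists_le_ker_of_lt_top _ (lt_top_iff_ne_top.2 h)
  exact hg (hsep g fun x hx => hle (Submodule.subset_span hx))

theorem finrank_vectorSpan_of_sep (hn : 0 < n) {S F : Set (Fin n → ℝ)}
    {f : (Fin n → ℝ) →ₗ[ℝ] ℝ} (hf : ∀ x ∈ F, f x = 1) (hSF : S ⊆ F)
    (hsep : ∀ g : (Fin n → ℝ) →ₗ[ℝ] ℝ, (∀ x ∈ S, g x = 0) → g = 0) :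
    Module.finrank ℝ (vectorSpan ℝ F) + 1 = n := by
  have hspan := span_eq_top_of_sep hsep
  have hne : S.Nonempty := by
    by_contra h
    rw [Set.not_nonempty_iff_eq_empty] at h
    have h1 := hsep (LinearMap.proj ⟨0, hn⟩) (by simp [h])
    have h2 := LinearMap.congr_fun h1 (Pi.single ⟨0, hn⟩ 1)
    simp at h2
  obtain ⟨s, hs⟩ := hne
  have hf0 : f ≠ 0 := by
    rintro rfl
    simpa using hf s (hSF hs)
  have hker : Module.finrank ℝ f.ker + 1 = n := by
    have h1 := LinearMap.finrank_range_add_finrank_ker f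
    rw [LinearMap.range_eq_top.2 (LinearMap.surjective_of_ne_zero hf0), finrank_top] at h1
    simp at h1
    omega
  have hle : vectorSpan ℝ F ≤ f.ker := by
    rw [vectorSpan_def, Submodule.span_le]
    rintro _ ⟨x, hx, y, hy, rfl⟩
    simp [hf x hx, hf y hy]
  have hge : (⊤ : Submodule ℝ (Fin n → ℝ)) ≤ vectorSpan ℝ F ⊔ Submodule.span ℝ {s} := by
    rw [← hspan, Submodule.span_le]
    intro x hx
    have : x = (x -ᵥ s) + s := by simp
    rw [this]
    exact Submodule.add_mem_sup (vsub_mem_vectorSpan ℝ (hSF hx) (hSF hs))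
      (Submodule.mem_span_singleton_self s)
  have h2 := Submodule.finrank_mono hge
  rw [finrank_top, Module.finrank_fin_fun] at h2
  have h3 := Submodule.finrank_add_le_finrank_add_finrank (vectorSpan ℝ F) (Submodule.span ℝ {s})
  have hs0 : s ≠ 0 := by
    rintro rfl
    simpa using hf 0 (hSF hs)
  have h4 := finrank_span_singleton (K := ℝ) hs0
  have h5 := Submodule.finrank_mono hle
  omega

/-- A supporting functional of a smooth Fano polytope whose contact vertices span the space
defines a facet. -/
theorem IsSmoothFano.isUnimodularBasis {Q : Set (Fin n → ℝ)} (hQ : IsSmoothFano Q) (hn : 0 < n)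
    {f : (Fin n → ℝ) →ₗ[ℝ] ℝ} (hle : ∀ x ∈ vertexSet Q, f x ≤ 1)
    (hsep : ∀ g : (Fin n → ℝ) →ₗ[ℝ] ℝ, (∀ x ∈ vertexSet Q, f x = 1 → g x = 0) → g = 0) :
    IsUnimodularBasis {x ∈ vertexSet Q | f x = 1} := by
  have hsep' : ∀ g : (Fin n → ℝ) →ₗ[ℝ] ℝ,
      (∀ x ∈ {x ∈ vertexSet Q | f x = 1}, g x = 0) → g = 0 :=
    fun g hg => hsep g fun x hx hfx => hg x ⟨hx, hfx⟩
  have hQle : ∀ x ∈ Q, f x ≤ 1 := fun x hx => hQ.le_of_vertexSet hle hx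
  set F : Set (Fin n → ℝ) := {x ∈ Q | f x = 1} with hF
  have hface : IsFaceOf F Q := by
    rintro ⟨x0, hx0, hfx0⟩
    refine ⟨LinearMap.toContinuousLinearMap f, ?_⟩
    ext x
    constructor
    · rintro ⟨hx, hfx⟩
      exact ⟨hx, fun y hy => by simpa [hfx] using hQle y hy⟩
    · rintro ⟨hx, hmax⟩
      have := hmax x0 hx0
      simp only [LinearMap.coe_toContinuousLinearMap'] at this
      exact ⟨hx, le_antisymm (hQle x hx) (hfx0 ▸ this)⟩
  have hfr := finrank_vectorSpan_of_sep hn (S := {x ∈ vertexSet Q | f x = 1}) (F := F) (f := f)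
    (fun x hx => hx.2) (fun x hx => ⟨extremePoints_subset hx.1, hx.2⟩) hsep'
  have h := hQ.2.2 F ⟨hface, hfr⟩
  convert h using 1
  ext x
  constructor
  · rintro ⟨hx, hfx⟩
    exact ⟨hx, extremePoints_subset hx, hfx⟩
  · rintro ⟨hx, -, hfx⟩
    exact ⟨hx, hfx⟩

theorem IsSmoothFano.integral_of_supporting {Q : Set (Fin n → ℝ)} (hQ : IsSmoothFano Q)
    (hn : 0 < n) {f : (Fin n → ℝ) →ₗ[ℝ] ℝ} (hle : ∀ x ∈ vertexSet Q, f x ≤ 1)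
    (hsep : ∀ g : (Fin n → ℝ) →ₗ[ℝ] ℝ, (∀ x ∈ vertexSet Q, f x = 1 → g x = 0) → g = 0) :
    LatticeIntegral f := by
  obtain ⟨b, -, hr, g, hg, -, hx⟩ :=
    exists_dual_of_isUnimodularBasis (hQ.isUnimodularBasis hn hle hsep)
  intro x hxl
  choose m hm using fun i => hg i x hxl
  refine ⟨∑ i, m i, ?_⟩
  rw [hx x, map_sum]
  push_cast
  refine Finset.sum_congr rfl fun i _ => ?_
  have : b i ∈ Set.range b := ⟨i, rfl⟩
  rw [hr] at this
  rw [map_smul, this.2, hm]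
  simp

theorem IsSmoothFano.exists_dual_of_supporting {Q : Set (Fin n → ℝ)} (hQ : IsSmoothFano Q)
    (hn : 0 < n) {f : (Fin n → ℝ) →ₗ[ℝ] ℝ} (hle : ∀ x ∈ vertexSet Q, f x ≤ 1)
    (hsep : ∀ g : (Fin n → ℝ) →ₗ[ℝ] ℝ, (∀ x ∈ vertexSet Q, f x = 1 → g x = 0) → g = 0)
    {s : Fin n → ℝ} (hs : s ∈ vertexSet Q) (hfs : f s = 1) :
    ∃ g : (Fin n → ℝ) →ₗ[ℝ] ℝ, LatticeIntegral g ∧ g s = 1 ∧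
      ∀ x ∈ vertexSet Q, f x = 1 → x ≠ s → g x = 0 := by
  obtain ⟨b, -, hr, g, hg, hgb, -⟩ :=
    exists_dual_of_isUnimodularBasis (hQ.isUnimodularBasis hn hle hsep)
  have hs' : s ∈ Set.range b := hr ▸ ⟨hs, hfs⟩
  obtain ⟨i, rfl⟩ := hs'
  refine ⟨g i, hg i, by simp [hgb], fun x hx hfx hne => ?_⟩
  have hx' : x ∈ Set.range b := hr ▸ ⟨hx, hfx⟩
  obtain ⟨j, rfl⟩ := hx'
  rw [hgb, if_neg]
  rintro rfl
  exact hne rfl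

/-- Integral linear functionals `f φ` bounded by one on a finite configuration `p` of lattice
points, whose contact sets are lattice bases and are linked by wall crossings. They are the
facet functionals of the smooth Fano polytope spanned by `p`. -/
structure FacetSystem {n : ℕ} {I Φ : Type*} (p : I → Fin n → ℝ)
    (f : Φ → (Fin n → ℝ) →ₗ[ℝ] ℝ) : Prop where
  lattice : ∀ i, IsLatticePoint (p i)
  le_one : ∀ φ i, f φ (p i) ≤ 1
  dual : ∀ φ i, f φ (p i) = 1 → ∃ g : (Fin n → ℝ) →ₗ[ℝ] ℝ, LatticeIntegral g ∧ g (p i) = 1 ∧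
    ∀ j, f φ (p j) = 1 → j ≠ i → g (p j) = 0
  sep : ∀ φ (g : (Fin n → ℝ) →ₗ[ℝ] ℝ), (∀ i, f φ (p i) = 1 → g (p i) = 0) → g = 0
  wall : ∀ φ i, f φ (p i) = 1 → ∃ φ', f φ' (p i) < 1 ∧
    ∀ j, j ≠ i → f φ (p j) = 1 → f φ' (p j) = 1
  cover : ∀ i, ∃ φ, f φ (p i) = 1

theorem mem_convexHull_range_iff {E I : Type*} [AddCommGroup E] [Module ℝ E] [Fintype I]
    {p : I → E} {x : E} : x ∈ convexHull ℝ (Set.range p) ↔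
      ∃ c : I → ℝ, (∀ i, 0 ≤ c i) ∧ ∑ i, c i = 1 ∧ ∑ i, c i • p i = x := by
  classical
  constructor
  · intro hx
    have hsub : Set.range p ⊆ {x | ∃ c : I → ℝ, (∀ i, 0 ≤ c i) ∧ ∑ i, c i = 1 ∧
        ∑ i, c i • p i = x} := by
      rintro _ ⟨i, rfl⟩
      refine ⟨Pi.single i 1, fun j => ?_, by simp, by simp [Pi.single_apply]⟩
      by_cases h : j = i
      · subst h
        simp
      · simp [h]
    refine convexHull_min hsub ?_ hx
    rintro _ ⟨c, hc, hc1, rfl⟩ _ ⟨d, hd, hd1, rfl⟩ s t hs ht hst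
    refine ⟨fun i => s * c i + t * d i, fun i => ?_, ?_, ?_⟩
    · have := hc i
      have := hd i
      positivity
    · rw [Finset.sum_add_distrib, ← Finset.mul_sum, ← Finset.mul_sum, hc1, hd1]
      simpa using hst
    · simp only [add_smul, mul_smul, Finset.sum_add_distrib, Finset.smul_sum]
  · rintro ⟨c, hc, hc1, rfl⟩
    exact mem_convexHull_of_exists_fintype c p hc hc1 (fun i => ⟨i, rfl⟩) rfl

/-- The maximum face of a linear functional on the convex hull of a finite family. -/
theorem exposed_convexHull_range {n : ℕ} {I : Type*} [Fintype I] {p : I → Fin n → ℝ}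
    {h : (Fin n → ℝ) →ₗ[ℝ] ℝ} {N : ℝ} (hle : ∀ i, h (p i) ≤ N) (hne : ∃ i, h (p i) = N) :
    {x ∈ convexHull ℝ (Set.range p) | ∀ y ∈ convexHull ℝ (Set.range p), h y ≤ h x} =
      convexHull ℝ (p '' {i | h (p i) = N}) := by
  have hP : ∀ x ∈ convexHull ℝ (Set.range p), h x ≤ N := fun x hx =>
    convexHull_min (t := {x | h x ≤ N}) (by rintro _ ⟨i, rfl⟩; exact hle i)
      (convex_halfSpace_le h.isLinear N) hx
  obtain ⟨i0, hi0⟩ := hne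
  ext x
  constructor
  · rintro ⟨hx, hmax⟩
    have hxN : h x = N :=
      le_antisymm (hP x hx) (hi0 ▸ hmax _ (subset_convexHull ℝ _ ⟨i0, rfl⟩))
    obtain ⟨c, hc, hc1, rfl⟩ := mem_convexHull_range_iff.1 hx
    have hz : ∑ i, c i * (N - h (p i)) = 0 := by
      simp only [mul_sub, Finset.sum_sub_distrib, ← Finset.sum_mul, hc1]
      rw [map_sum] at hxN
      simp only [map_smul, smul_eq_mul] at hxN
      linarith
    rw [Finset.sum_eq_zero_iff_of_nonneg
      (fun i _ => mul_nonneg (hc i) (sub_nonneg.2 (hle i)))] at hz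
    have hc0 : ∀ i, h (p i) ≠ N → c i = 0 := fun i hi =>
      (mul_eq_zero.1 (hz i (Finset.mem_univ i))).resolve_right
        (fun h' => hi (sub_eq_zero.1 h').symm)
    classical
    have hs : ∑ i, c i • p i = ∑ i with h (p i) = N, c i • p i := by
      rw [Finset.sum_filter]
      refine Finset.sum_congr rfl fun i _ => ?_
      split_ifs with hi
      · rfl
      · simp [hc0 i hi]
    have hs1 : ∑ i with h (p i) = N, c i = 1 := by
      rw [← hc1, Finset.sum_filter]
      refine Finset.sum_congr rfl fun i _ => ?_
      split_ifs with hi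
      · rfl
      · simp [hc0 i hi]
    rw [hs]
    exact (convex_convexHull ℝ _).sum_mem (fun i _ => hc i) hs1
      fun i hi => subset_convexHull ℝ _ ⟨i, (Finset.mem_filter.1 hi).2, rfl⟩
  · intro hx
    have hxN : h x = N := by
      refine convexHull_min (t := {x | h x = N}) ?_ (convex_hyperplane h.isLinear N) hx
      rintro _ ⟨i, hi, rfl⟩
      exact hi
    exact ⟨convexHull_mono (Set.image_subset_range _ _) hx, fun y hy => hxN ▸ hP y hy⟩

end Polytopes

namespace FacetSystem

variable {n : ℕ} {I Φ : Type*} {p : I → Fin n → ℝ} {f : Φ → (Fin n → ℝ) →ₗ[ℝ] ℝ}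

theorem nonempty_index (h : FacetSystem p f) [Nonempty Φ] (hn : 0 < n) : Nonempty I := by
  by_contra hI
  rw [not_nonempty_iff] at hI
  have h1 := h.sep (Classical.arbitrary Φ) (LinearMap.proj ⟨0, hn⟩) fun i => isEmptyElim i
  have h2 := LinearMap.congr_fun h1 (Pi.single ⟨0, hn⟩ 1)
  simp at h2

theorem le_one_of_mem (h : FacetSystem p f) (φ : Φ) {x : Fin n → ℝ}
    (hx : x ∈ convexHull ℝ (Set.range p)) : f φ x ≤ 1 :=
  convexHull_min (t := {x | f φ x ≤ 1}) (by rintro _ ⟨i, rfl⟩; exact h.le_one φ i)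
    (convex_halfSpace_le (f φ).isLinear 1) hx

theorem injective (h : FacetSystem p f) : Function.Injective p := by
  intro i j hij
  by_contra hne
  obtain ⟨φ, hφ⟩ := h.cover i
  obtain ⟨g, -, hg1, hg0⟩ := h.dual φ i hφ
  have := hg0 j (hij ▸ hφ) (Ne.symm hne)
  rw [← hij, hg1] at this
  exact one_ne_zero this

variable [Fintype I]

theorem exists_coords (h : FacetSystem p f) (φ : Φ) :
    ∃ g : I → (Fin n → ℝ) →ₗ[ℝ] ℝ, (∀ i, LatticeIntegral (g i)) ∧
      (∀ i, f φ (p i) ≠ 1 → g i = 0) ∧ (∀ i, f φ (p i) = 1 → g i (p i) = 1) ∧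
      (∀ i j, f φ (p j) = 1 → j ≠ i → g i (p j) = 0) ∧
      (∀ x, ∑ i, g i x • p i = x) ∧ ∀ x, f φ x = ∑ i, g i x := by
  classical
  have H : ∀ i, ∃ g : (Fin n → ℝ) →ₗ[ℝ] ℝ, LatticeIntegral g ∧ (f φ (p i) ≠ 1 → g = 0) ∧
      (f φ (p i) = 1 → g (p i) = 1) ∧ ∀ j, f φ (p j) = 1 → j ≠ i → g (p j) = 0 := by
    intro i
    by_cases hi : f φ (p i) = 1
    · obtain ⟨g, hg, hgi, hgj⟩ := h.dual φ i hi
      exact ⟨g, hg, fun h' => absurd hi h', fun _ => hgi, hgj⟩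
    · exact ⟨0, fun x _ => ⟨0, by simp⟩, fun _ => rfl, fun h' => absurd h' hi, by simp⟩
  choose g hg hg0 hg1 hgj using H
  have key : ∀ (e : (Fin n → ℝ) →ₗ[ℝ] ℝ) x, ∑ i, g i x * e (p i) = e x := by
    intro e x
    have h0 : e - ∑ i, e (p i) • g i = 0 := by
      refine h.sep φ _ fun j hj => ?_
      simp only [LinearMap.sub_apply, LinearMap.sum_apply, LinearMap.smul_apply, smul_eq_mul]
      rw [Finset.sum_eq_single j, hg1 j hj]
      · ring
      · intro i _ hij
        rw [hgj i j hj hij.symm, mul_zero]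
      · simp
    have h1 := LinearMap.congr_fun h0 x
    simp only [LinearMap.sub_apply, LinearMap.sum_apply, LinearMap.smul_apply, smul_eq_mul,
      LinearMap.zero_apply] at h1
    rw [sub_eq_zero.1 h1]
    exact Finset.sum_congr rfl fun i _ => mul_comm _ _
  refine ⟨g, hg, hg0, hg1, hgj, fun x => ?_, fun x => ?_⟩
  · ext q
    have := key (LinearMap.proj q) x
    simpa using this
  · rw [← key (f φ) x]
    refine Finset.sum_congr rfl fun i _ => ?_
    by_cases hi : f φ (p i) = 1
    · rw [hi, mul_one]
    · simp [hg0 i hi]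

/-- The cones over the facets cover the space. -/
theorem exists_mem_cone [Finite Φ] [Nonempty Φ] (h : FacetSystem p f) (x : Fin n → ℝ) :
    ∃ φ, ∃ c : I → ℝ, (∀ i, 0 ≤ c i) ∧ (∀ i, f φ (p i) ≠ 1 → c i = 0) ∧
      (∑ i, c i • p i = x) ∧ f φ x = ∑ i, c i ∧
      (IsLatticePoint x → ∀ i, ∃ m : ℤ, c i = m) := by
  obtain ⟨φ, hφ⟩ := Finite.exists_max fun φ => f φ x
  obtain ⟨g, hg, hg0, hg1, hgj, hx, hf⟩ := h.exists_coords φ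
  refine ⟨φ, fun i => g i x, fun i => ?_, fun i hi => by simp [hg0 i hi], hx x, hf x,
    fun hl i => hg i x hl⟩
  by_cases hi : f φ (p i) = 1
  · obtain ⟨φ', hlt, hφ'⟩ := h.wall φ i hi
    have h0 : f φ' - f φ - (f φ' (p i) - 1) • g i = 0 := by
      refine h.sep φ _ fun j hj => ?_
      rcases eq_or_ne j i with rfl | hji
      · simp [hi, hg1 j hj]
      · simp [hj, hφ' j hji hj, hgj i j hj hji]
    have h1 := LinearMap.congr_fun h0 x
    simp only [LinearMap.sub_apply, LinearMap.smul_apply, smul_eq_mul,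
      LinearMap.zero_apply] at h1
    have h2 := hφ φ'
    by_contra hneg
    push Not at hneg
    have := mul_pos_of_neg_of_neg (sub_neg.2 hlt) hneg
    linarith
  · simp [hg0 i hi]

theorem zero_mem_convexHull [Finite Φ] [Nonempty Φ] (h : FacetSystem p f) (hn : 0 < n) :
    (0 : Fin n → ℝ) ∈ convexHull ℝ (Set.range p) := by
  classical
  obtain ⟨i0⟩ := h.nonempty_index hn
  obtain ⟨φ, c, hc, -, hx, -⟩ := h.exists_mem_cone (-p i0)
  have hpos : 0 < ∑ i, c i + 1 := by
    have := Finset.sum_nonneg fun i (_ : i ∈ Finset.univ) => hc i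
    linarith
  refine mem_convexHull_range_iff.2
    ⟨fun i => (c i + if i = i0 then 1 else 0) / (∑ i, c i + 1), fun i => ?_, ?_, ?_⟩
  · have := hc i
    dsimp only
    split_ifs <;> positivity
  · rw [← Finset.sum_div, Finset.sum_add_distrib]
    simp [hpos.ne']
  · have : ∀ i, ((c i + if i = i0 then 1 else 0) / (∑ i, c i + 1)) • p i =
        (∑ i, c i + 1)⁻¹ • (c i • p i + (if i = i0 then (1 : ℝ) else 0) • p i) := by
      intro i
      rw [← add_smul, smul_smul, div_eq_inv_mul]
    rw [Finset.sum_congr rfl fun i _ => this i, ← Finset.smul_sum, Finset.sum_add_distrib, hx]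
    simp

theorem mem_convexHull_of_le [Finite Φ] [Nonempty Φ] (h : FacetSystem p f) (hn : 0 < n)
    {x : Fin n → ℝ} (hx : ∀ φ, f φ x ≤ 1) : x ∈ convexHull ℝ (Set.range p) := by
  obtain ⟨φ, c, hc, -, rfl, hf, -⟩ := h.exists_mem_cone x
  have hle : ∑ i, c i ≤ 1 := hf ▸ hx φ
  have hnn := Finset.sum_nonneg fun i (_ : i ∈ Finset.univ) => hc i
  rcases hnn.eq_or_lt with h0 | hpos
  · have : ∀ i, c i = 0 := fun i =>
      (Finset.sum_eq_zero_iff_of_nonneg fun i _ => hc i).1 h0.symm i (Finset.mem_univ i)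
    simpa [this] using h.zero_mem_convexHull hn
  · have hm : ∑ i, (c i / ∑ i, c i) • p i ∈ convexHull ℝ (Set.range p) :=
      mem_convexHull_range_iff.2 ⟨_, fun i => div_nonneg (hc i) hnn,
        by rw [← Finset.sum_div, div_self hpos.ne'], rfl⟩
    have := (convex_convexHull ℝ _).smul_mem_of_zero_mem (h.zero_mem_convexHull hn) hm
      ⟨hnn, hle⟩
    convert this using 1
    rw [Finset.smul_sum]
    refine Finset.sum_congr rfl fun i _ => ?_
    rw [smul_smul, mul_div_cancel₀ _ hpos.ne']

theorem zero_mem_interior [Finite Φ] [Nonempty Φ] (h : FacetSystem p f) (hn : 0 < n) :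
    (0 : Fin n → ℝ) ∈ interior (convexHull ℝ (Set.range p)) := by
  rw [mem_interior]
  refine ⟨⋂ φ, {x | f φ x < 1}, fun x hx => ?_, ?_, ?_⟩
  · exact h.mem_convexHull_of_le hn fun φ => (Set.mem_iInter.1 hx φ).le
  · exact isOpen_iInter_of_finite fun φ =>
      isOpen_lt (LinearMap.continuous_of_finiteDimensional (f φ)) continuous_const
  · simp

/-- The origin is the only interior lattice point. -/
theorem eq_zero_of_mem_interior [Finite Φ] [Nonempty Φ] (h : FacetSystem p f)
    {x : Fin n → ℝ} (hl : IsLatticePoint x)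
    (hx : x ∈ interior (convexHull ℝ (Set.range p))) : x = 0 := by
  obtain ⟨φ, c, hc, -, hs, hf, hinteg⟩ := h.exists_mem_cone x
  have ht : Filter.Tendsto (fun s : ℝ => (1 + s) • x) (nhds 0) (nhds x) := by
    have : Continuous fun s : ℝ => (1 + s) • x := by fun_prop
    simpa using this.tendsto 0
  have hev := ht.eventually (mem_interior_iff_mem_nhds.1 hx)
  obtain ⟨ε, hε, hb⟩ := Metric.eventually_nhds_iff.1 hev
  have hm := h.le_one_of_mem φ (hb (y := ε / 2) (by
    rw [Real.dist_eq, sub_zero, abs_of_pos (by linarith)]; linarith))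
  rw [map_smul, smul_eq_mul, hf] at hm
  choose m hm' using hinteg hl
  have hsum : ∑ i, c i = ((∑ i, m i : ℤ) : ℝ) := by
    push_cast
    exact Finset.sum_congr rfl fun i _ => hm' i
  have hlt : ∑ i, c i < 1 := by nlinarith
  rw [hsum] at hlt
  have h1 : ∑ i, m i < 1 := by exact_mod_cast hlt
  have hm0 : ∀ i, 0 ≤ m i := fun i => by
    have := hc i
    rw [hm'] at this
    exact_mod_cast this
  have hz : ∑ i, m i = 0 := le_antisymm (by omega) (Finset.sum_nonneg fun i _ => hm0 i)
  have hz' := (Finset.sum_eq_zero_iff_of_nonneg fun i _ => hm0 i).1 hz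
  rw [← hs]
  refine Finset.sum_eq_zero fun i hi => ?_
  rw [hm' i, hz' i hi]
  simp

theorem isFaceOf_of_subset (h : FacetSystem p f) {φ : Φ} {A : Set I}
    (hA : ∀ i ∈ A, f φ (p i) = 1) :
    IsFaceOf (convexHull ℝ (p '' A)) (convexHull ℝ (Set.range p)) := by
  classical
  obtain ⟨g, hg, hg0, hg1, hgj, -, hf⟩ := h.exists_coords φ
  intro hne
  obtain ⟨_, i0, hi0, rfl⟩ := convexHull_nonempty_iff.1 hne
  set e : (Fin n → ℝ) →ₗ[ℝ] ℝ := ∑ i with i ∉ A, g i with he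
  obtain ⟨N, hN⟩ : ∃ N : ℝ, 0 < N ∧ ∀ i, -e (p i) < N := by
    obtain ⟨M, hM⟩ := (Set.finite_range fun i => -e (p i)).bddAbove
    exact ⟨max M 0 + 1, by positivity, fun i =>
      ((hM ⟨i, rfl⟩).trans (le_max_left _ _)).trans_lt (lt_add_one _)⟩
  have heV : ∀ i, f φ (p i) = 1 → e (p i) = if i ∈ A then 0 else 1 := by
    intro i hi
    rw [he, LinearMap.sum_apply, Finset.sum_filter]
    rw [Finset.sum_eq_single i]
    · by_cases hiA : i ∈ A <;> simp [hiA, hg1 i hi]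
    · intro j _ hji
      split_ifs
      · rfl
      · exact hgj j i hi hji.symm
    · simp
  have hoff : ∀ i, f φ (p i) ≠ 1 → f φ (p i) ≤ 0 := by
    intro i hi
    have hle := h.le_one φ i
    choose m hm using fun j => hg j (p i) (h.lattice i)
    have hsum : f φ (p i) = ((∑ j, m j : ℤ) : ℝ) := by
      rw [hf]
      push_cast
      exact Finset.sum_congr rfl fun j _ => hm j
    rw [hsum] at hle hi ⊢
    have h1 : ∑ j, m j ≤ 1 := by exact_mod_cast hle
    have h2 : ∑ j, m j ≠ 1 := by exact_mod_cast hi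
    have h3 : ∑ j, m j ≤ 0 := by omega
    exact_mod_cast h3
  have hval : ∀ i, (N • f φ - e) (p i) ≤ N ∧ ((N • f φ - e) (p i) = N ↔ i ∈ A) := by
    intro i
    simp only [LinearMap.sub_apply, LinearMap.smul_apply, smul_eq_mul]
    by_cases hi : f φ (p i) = 1
    · rw [heV i hi, hi]
      by_cases hiA : i ∈ A
      · simp [hiA]
      · simp [hiA]
    · have h1 := mul_nonpos_of_nonneg_of_nonpos hN.1.le (hoff i hi)
      have h2 := hN.2 i
      refine ⟨by linarith, fun h' => ?_, fun h' => absurd (hA i h') hi⟩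
      linarith
  have := exposed_convexHull_range (fun i => (hval i).1) ⟨i0, (hval i0).2.2 hi0⟩
  simp only [(hval _).2, Set.ofPred_mem_eq] at this
  exact ⟨LinearMap.toContinuousLinearMap (N • f φ - e), this.symm⟩

theorem vertexSet_eq (h : FacetSystem p f) :
    vertexSet (convexHull ℝ (Set.range p)) = Set.range p := by
  refine Set.Subset.antisymm extremePoints_convexHull_subset ?_
  rintro _ ⟨i, rfl⟩
  obtain ⟨φ, hφ⟩ := h.cover i
  have := h.isFaceOf_of_subset (φ := φ) (A := {i}) (by simpa using hφ)
  rw [Set.image_singleton, convexHull_singleton] at this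
  exact isExtreme_singleton.1 (IsExposed.isExtreme this)

theorem exists_facet_of_max [Finite Φ] [Nonempty Φ] (h : FacetSystem p f)
    {e : (Fin n → ℝ) →ₗ[ℝ] ℝ} {m : ℝ} (hm : 0 < m) (hle : ∀ i, e (p i) ≤ m) {A : Set I}
    (hA : ∀ i ∈ A, e (p i) = m) : ∃ φ, ∀ i ∈ A, f φ (p i) = 1 := by
  classical
  obtain ⟨φ, c, hc, -, hs, hf, -⟩ := h.exists_mem_cone (∑ i with i ∈ A, p i)
  refine ⟨φ, ?_⟩
  have h1 : e (∑ i with i ∈ A, p i) = ∑ i with i ∈ A, m := by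
    rw [map_sum]
    exact Finset.sum_congr rfl fun i hi => hA i (Finset.mem_filter.1 hi).2
  have h2 : e (∑ i with i ∈ A, p i) ≤ m * ∑ i, c i := by
    rw [← hs, map_sum, Finset.mul_sum]
    refine Finset.sum_le_sum fun i _ => ?_
    rw [map_smul, smul_eq_mul, mul_comm]
    exact mul_le_mul_of_nonneg_right (hle i) (hc i)
  rw [h1, ← hf, map_sum] at h2
  have h3 : ∑ i with i ∈ A, (1 : ℝ) ≤ ∑ i with i ∈ A, f φ (p i) := by
    have : (∑ i with i ∈ A, m) = m * ∑ i with i ∈ A, (1 : ℝ) := by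
      rw [Finset.mul_sum]
      simp
    rw [this] at h2
    exact le_of_mul_le_mul_left h2 hm
  have h4 := (Finset.sum_eq_sum_iff_of_le (fun i _ => h.le_one φ i)).1
    (le_antisymm (Finset.sum_le_sum fun i _ => h.le_one φ i) h3)
  exact fun i hi => h4 i (Finset.mem_filter.2 ⟨Finset.mem_univ i, hi⟩)

theorem card_facet_le [DecidableEq I] (h : FacetSystem p f) (φ : Φ)
    [DecidablePred fun i => f φ (p i) = 1] : {i | f φ (p i) = 1}.toFinset.card ≤ n := by
  obtain ⟨g, hg, hg0, hg1, hgj, -, hf⟩ := h.exists_coords φ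
  have hli : LinearIndependent ℝ fun i : {i // f φ (p i) = 1} => p i := by
    rw [Fintype.linearIndependent_iff]
    intro c hc i
    have := congrArg (g i) hc
    rw [map_sum, map_zero, Finset.sum_eq_single i] at this
    · simpa [hg1 i i.2] using this
    · intro j _ hji
      rw [map_smul, hgj i j j.2 (fun h' => hji (Subtype.ext h')), smul_zero]
    · simp
  have := hli.fintype_card_le_finrank
  rw [Module.finrank_fin_fun] at this
  rwa [Set.toFinset_card]

/-- An exposed face is either the whole polytope or is cut out by a functional with positive
maximum. -/
theorem isFaceOf_cases [Finite Φ] [Nonempty Φ] (h : FacetSystem p f) (hn : 0 < n)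
    {G : Set (Fin n → ℝ)} (hG : IsFaceOf G (convexHull ℝ (Set.range p))) (hne : G.Nonempty) :
    G = convexHull ℝ (Set.range p) ∨ ∃ φ, ∃ A : Set I, (∀ i ∈ A, f φ (p i) = 1) ∧
      G = convexHull ℝ (p '' A) := by
  obtain ⟨e, rfl⟩ := hG hne
  obtain ⟨x, hx, hmax⟩ := hne
  rcases eq_or_ne (e : (Fin n → ℝ) →ₗ[ℝ] ℝ) 0 with h0 | h0
  · left
    have : ∀ y, e y = 0 := fun y => LinearMap.congr_fun h0 y
    ext y
    simp [this]
  · right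
    have hm0 : 0 < e x := by
      by_contra hneg
      exact h0 (linearMap_eq_zero_of_nonpos (h.zero_mem_interior hn)
        fun y hy => (hmax y hy).trans (not_lt.1 hneg))
    obtain ⟨φ, hφ⟩ := h.exists_facet_of_max (e := e) hm0
      (fun i => hmax _ (subset_convexHull ℝ _ ⟨i, rfl⟩)) (A := {i | e (p i) = e x})
      fun i hi => hi
    refine ⟨φ, _, hφ, ?_⟩
    refine exposed_convexHull_range (h := (e : (Fin n → ℝ) →ₗ[ℝ] ℝ))
      (fun i => hmax _ (subset_convexHull ℝ _ ⟨i, rfl⟩)) ?_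
    by_contra hno
    push Not at hno
    have hlt : ∀ i, e (p i) < e x := fun i =>
      lt_of_le_of_ne (hmax _ (subset_convexHull ℝ _ ⟨i, rfl⟩)) (hno i)
    have : e x < e x := convexHull_min (t := {y | e y < e x}) (by rintro _ ⟨i, rfl⟩; exact hlt i)
      (convex_halfSpace_lt (e : (Fin n → ℝ) →ₗ[ℝ] ℝ).isLinear _) hx
    exact lt_irrefl _ this

theorem exists_facet_of_isFaceOf [Finite Φ] [Nonempty Φ] (h : FacetSystem p f) (hn : 0 < n)
    {A : Set I} (hA : A ≠ Set.univ)
    (hface : IsFaceOf (convexHull ℝ (p '' A)) (convexHull ℝ (Set.range p))) :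
    ∃ φ, ∀ i ∈ A, f φ (p i) = 1 := by
  rcases A.eq_empty_or_nonempty with rfl | hne
  · exact ⟨Classical.arbitrary Φ, by simp⟩
  rcases h.isFaceOf_cases hn hface (hne.image p).convexHull with h1 | ⟨φ, B, hB, h1⟩
  · refine absurd (Set.eq_univ_of_forall fun i => ?_) hA
    have : p i ∈ vertexSet (convexHull ℝ (p '' A)) := by
      rw [h1, h.vertexSet_eq]
      exact ⟨i, rfl⟩
    exact (h.injective.mem_set_image).1 (extremePoints_convexHull_subset this)
  · refine ⟨φ, fun i hi => ?_⟩
    have hx : p i ∈ convexHull ℝ (p '' B) := h1 ▸ subset_convexHull ℝ _ ⟨i, hi, rfl⟩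
    exact convexHull_min (t := {x | f φ x = 1}) (by rintro _ ⟨j, hj, rfl⟩; exact hB j hj)
      (convex_hyperplane (f φ).isLinear 1) hx

theorem isSmoothFano [Finite Φ] [Nonempty Φ] (h : FacetSystem p f) (hn : 2 ≤ n) :
    IsSmoothFano (convexHull ℝ (Set.range p)) := by
  classical
  have hn0 : 0 < n := by omega
  refine ⟨⟨⟨Finset.univ.image p, ?_, by simp⟩, ?_⟩, h.zero_mem_interior hn0, ?_⟩
  · simpa using h.lattice
  · exact (convex_convexHull ℝ _).interior_nonempty_iff_affineSpan_eq_top.1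
      ⟨0, h.zero_mem_interior hn0⟩
  rintro G ⟨hG, hrank⟩
  have hne : G.Nonempty := by
    by_contra hemp
    rw [Set.not_nonempty_iff_eq_empty] at hemp
    subst hemp
    rw [vectorSpan_empty, finrank_bot] at hrank
    omega
  rcases h.isFaceOf_cases hn0 hG hne with rfl | ⟨φ, A, hA, rfl⟩
  · have htop := (convex_convexHull ℝ _).interior_nonempty_iff_affineSpan_eq_top.1
      ⟨0, h.zero_mem_interior hn0⟩
    rw [← direction_affineSpan, htop, AffineSubspace.direction_top, finrank_top,
      Module.finrank_fin_fun] at hrank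
    omega
  · have hcardA : n ≤ A.toFinset.card := by
      have hAne : A.toFinset.Nonempty := by
        rw [Set.toFinset_nonempty]
        by_contra hemp
        rw [Set.not_nonempty_iff_eq_empty] at hemp
        rw [hemp, Set.image_empty, convexHull_empty] at hne
        exact Set.not_nonempty_empty hne
      obtain ⟨m, hm⟩ := Nat.exists_eq_succ_of_ne_zero hAne.card_ne_zero
      have h1 := finrank_vectorSpan_image_finset_le ℝ p A.toFinset hm
      rw [← direction_affineSpan, affineSpan_convexHull, direction_affineSpan] at hrank
      rw [Finset.coe_image, Set.coe_toFinset] at h1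
      omega
    have hV := h.card_facet_le φ
    have hsub : A.toFinset ⊆ {i | f φ (p i) = 1}.toFinset := by
      intro i hi
      simpa using hA i (by simpa using hi)
    have hEq := Finset.eq_of_subset_of_card_le hsub (hV.trans hcardA)
    have hcard : Fintype.card {i // i ∈ A} = n := by
      rw [← Set.toFinset_card]
      exact le_antisymm ((Finset.card_le_card hsub).trans hV) hcardA
    have hAeq : ∀ i, i ∈ A ↔ f φ (p i) = 1 := by
      intro i
      have := Finset.ext_iff.1 hEq i
      simpa using this
    have hset : vertexSet (convexHull ℝ (Set.range p)) ∩ convexHull ℝ (p '' A) = p '' A := by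
      rw [h.vertexSet_eq]
      ext x
      constructor
      · rintro ⟨⟨i, rfl⟩, hx⟩
        refine ⟨i, (hAeq i).2 ?_, rfl⟩
        exact convexHull_min (t := {x | f φ x = 1}) (by rintro _ ⟨j, hj, rfl⟩; exact hA j hj)
          (convex_hyperplane (f φ).isLinear 1) hx
      · rintro ⟨i, hi, rfl⟩
        exact ⟨⟨i, rfl⟩, subset_convexHull ℝ _ ⟨i, hi, rfl⟩⟩
    rw [hset]
    obtain ⟨g, hg, -, hg1, hgj, -, -⟩ := h.exists_coords φ
    let ε : Fin n ≃ {i // i ∈ A} := (Fintype.equivFinOfCardEq hcard).symm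
    have hr : p '' A = Set.range fun q => p (ε q) := by
      ext x
      constructor
      · rintro ⟨i, hi, rfl⟩
        exact ⟨ε.symm ⟨i, hi⟩, by simp⟩
      · rintro ⟨q, rfl⟩
        exact ⟨ε q, (ε q).2, rfl⟩
    rw [hr]
    refine isUnimodularBasis_range_of_dual _ (fun q => h.lattice _) (fun q => g (ε q))
      (fun q => hg _) fun q r => ?_
    split_ifs with hqr
    · subst hqr
      exact hg1 _ (hA _ (ε q).2)
    · exact hgj _ _ (hA _ (ε r).2) fun h' => hqr (ε.injective (Subtype.ext h'.symm))

end FacetSystem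

/-- Labels of the vertices. -/
inductive Vtx (a b k : ℕ) (l : Fin k → ℕ) : Type
  | v (i : Fin a)
  | y (q : Fin b)
  | z
  | t
  | u (r : Fin b)
  | w (j : Fin k) (i : Fin (l j + 1))

/-- A choice of one label in each of the families of vertices. -/
structure Idx (a b k : ℕ) (l : Fin k → ℕ) : Type where
  i : Fin a
  q : Fin b
  r : Fin b
  c : (j : Fin k) → Fin (l j + 1)

/-- The five types of facets, named by the two families among `v`, `y`, `z`, `t`, `u` they
contain. -/
inductive Kind : Type
  | yu
  | vz
  | yt
  | zu
  | vt

section Labels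

variable {a b k : ℕ} {l : Fin k → ℕ}

namespace Vtx

/-- The labels as a disjoint union. -/
def equivSum : Vtx a b k l ≃ (Fin a ⊕ Fin b) ⊕ (Fin b ⊕ Bool) ⊕ Σ j : Fin k, Fin (l j + 1) where
  toFun
    | v i => .inl (.inl i)
    | y q => .inl (.inr q)
    | z => .inr (.inl (.inr true))
    | t => .inr (.inl (.inr false))
    | u r => .inr (.inl (.inl r))
    | w j i => .inr (.inr ⟨j, i⟩)
  invFun
    | .inl (.inl i) => v i
    | .inl (.inr q) => y q
    | .inr (.inl (.inr true)) => z
    | .inr (.inl (.inr false)) => t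
    | .inr (.inl (.inl r)) => u r
    | .inr (.inr ⟨j, i⟩) => w j i
  left_inv x := by cases x <;> rfl
  right_inv x := by rcases x with (x | x) | (x | (_ | _)) | ⟨x, y⟩ <;> rfl

noncomputable instance : Fintype (Vtx a b k l) := Fintype.ofEquiv _ equivSum.symm

theorem card_eq : Fintype.card (Vtx a b k l) = a + 2 * b + 2 + (∑ j, l j) + k := by
  rw [Fintype.card_congr equivSum]
  simp only [Fintype.card_sum, Fintype.card_fin, Fintype.card_bool, Fintype.card_sigma,
    Finset.sum_add_distrib, Finset.sum_const, Finset.card_univ, smul_eq_mul]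
  omega

end Vtx

instance : Finite (Idx a b k l) :=
  Finite.of_injective (fun s => (s.i, s.q, s.r, s.c)) fun s s' h => by
    cases s
    cases s'
    simpa using h

instance : Finite Kind :=
  Finite.of_surjective (fun n : Fin 5 => match n with
    | 0 => Kind.yu | 1 => Kind.vz | 2 => Kind.yt | 3 => Kind.zu | 4 => Kind.vt) fun κ => by
    cases κ
    exacts [⟨0, rfl⟩, ⟨1, rfl⟩, ⟨2, rfl⟩, ⟨3, rfl⟩, ⟨4, rfl⟩]

/-- The labels missing from the facet of type `κ` determined by `s`. -/
def Kind.omits (κ : Kind) (s : Idx a b k l) : Vtx a b k l → Prop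
  | .v i => i = s.i ∧ κ ≠ vz ∧ κ ≠ vt
  | .y q => q = s.q ∧ κ ≠ yu ∧ κ ≠ yt
  | .z => κ ≠ vz ∧ κ ≠ zu
  | .t => κ ≠ yt ∧ κ ≠ vt
  | .u r => r = s.r ∧ κ ≠ yu ∧ κ ≠ zu
  | .w j i => i = s.c j

theorem Kind.exists_not_omits (ha : 2 ≤ a) (hb : 1 ≤ b) (hl : ∀ j, 1 ≤ l j) (x : Vtx a b k l) :
    ∃ κ : Kind, ∃ s : Idx a b k l, ¬ κ.omits s x := by
  let s : Idx a b k l := ⟨⟨0, by omega⟩, ⟨0, hb⟩, ⟨0, hb⟩, fun _ => 0⟩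
  cases x with
  | v i => exact ⟨vz, s, by simp [omits]⟩
  | y q => exact ⟨yu, s, by simp [omits]⟩
  | z => exact ⟨vz, s, by simp [omits]⟩
  | t => exact ⟨yt, s, by simp [omits]⟩
  | u r => exact ⟨yu, s, by simp [omits]⟩
  | w j i =>
    have := hl j
    obtain ⟨i', hne⟩ : ∃ i' : Fin (l j + 1), i ≠ i' := by
      have : Nontrivial (Fin (l j + 1)) := Fin.nontrivial_iff_two_le.2 (by omega)
      obtain ⟨i', h⟩ := exists_ne i
      exact ⟨i', h.symm⟩
    exact ⟨yu, { s with c := Function.update s.c j i' }, by simpa [omits] using hne⟩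

/-- Wall crossing. -/
theorem Kind.exists_wall (κ : Kind) (s : Idx a b k l) (x : Vtx a b k l) (hx : ¬ κ.omits s x) :
    ∃ κ' : Kind, ∃ s' : Idx a b k l, κ'.omits s' x ∧
      ∀ x', x' ≠ x → ¬ κ.omits s x' → ¬ κ'.omits s' x' := by
  classical
  cases x with
  | w j i =>
    refine ⟨κ, { s with c := Function.update s.c j i }, by simp [omits], ?_⟩
    intro x' hne hx'
    cases x' with
    | w j' i' =>
      rcases eq_or_ne j' j with rfl | hj
      · simpa [omits] using hne
      · simpa [omits, Function.update_of_ne hj] using hx'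
    | _ => exact hx'
  | v i =>
    refine ⟨match κ with | yu => yu | vz | zu => zu | yt | vt => yt, { s with i := i }, ?_,
      fun x' => ?_⟩
    · cases κ <;> simp [omits]
    · cases κ <;> cases x' <;> simp +contextual [omits]
  | y q =>
    refine ⟨match κ with | vz => vz | yu | zu => zu | yt | vt => vt, { s with q := q }, ?_,
      fun x' => ?_⟩
    · cases κ <;> simp [omits]
    · cases κ <;> cases x' <;> simp +contextual [omits]
  | u r =>
    refine ⟨match κ with | vt => vt | yu | yt => yt | vz | zu => vz, { s with r := r }, ?_,
      fun x' => ?_⟩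
    · cases κ <;> simp [omits]
    · cases κ <;> cases x' <;> simp +contextual [omits]
  | z =>
    refine ⟨match κ with | zu => yu | _ => vt, s, ?_, fun x' => ?_⟩
    · cases κ <;> simp [omits] at hx ⊢
    · cases κ <;> cases x' <;> simp [omits] at hx ⊢
  | t =>
    refine ⟨match κ with | yt => yu | _ => vz, s, ?_, fun x' => ?_⟩
    · cases κ <;> simp [omits] at hx ⊢
    · cases κ <;> cases x' <;> simp [omits] at hx ⊢

/-- Sets of labels contained in a facet. -/
theorem Kind.exists_subset_iff (A : Set (Vtx a b k l)) :
    (∃ κ : Kind, ∃ s : Idx a b k l, ∀ x ∈ A, ¬ κ.omits s x) ↔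
      (0 < a ∧ 0 < b) ∧ (∀ j, ∃ i, .w j i ∉ A) ∧
      ((∃ i, .v i ∉ A) ∨ ∃ q, .y q ∉ A) ∧ ((∃ q, .y q ∉ A) ∨ .z ∉ A) ∧ (.z ∉ A ∨ .t ∉ A) ∧
      (.t ∉ A ∨ ∃ r, .u r ∉ A) ∧ ((∃ r, .u r ∉ A) ∨ ∃ i, .v i ∉ A) := by
  constructor
  · rintro ⟨κ, s, h⟩
    refine ⟨⟨s.i.pos, s.q.pos⟩, fun j => ⟨s.c j, fun h' => h _ h' rfl⟩, ?_⟩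
    have hv : κ ≠ vz → κ ≠ vt → ∃ i, .v i ∉ A := fun h1 h2 => ⟨s.i, fun h' => h _ h' ⟨rfl, h1, h2⟩⟩
    have hy : κ ≠ yu → κ ≠ yt → ∃ i, .y i ∉ A := fun h1 h2 => ⟨s.q, fun h' => h _ h' ⟨rfl, h1, h2⟩⟩
    have hu : κ ≠ yu → κ ≠ zu → ∃ i, .u i ∉ A := fun h1 h2 => ⟨s.r, fun h' => h _ h' ⟨rfl, h1, h2⟩⟩
    have hz : κ ≠ vz → κ ≠ zu → .z ∉ A := fun h1 h2 h' => h _ h' ⟨h1, h2⟩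
    have ht : κ ≠ yt → κ ≠ vt → .t ∉ A := fun h1 h2 h' => h _ h' ⟨h1, h2⟩
    cases κ <;> simp only [ne_eq, reduceCtorEq, not_true_eq_false, not_false_eq_true,
      forall_true_left, false_imp_iff] at hv hy hu hz ht <;> tauto
  · rintro ⟨⟨ha, hb⟩, hw, h1, h2, h3, h4, h5⟩
    choose c hc using hw
    obtain ⟨i, hi⟩ : ∃ i, (∃ i, .v i ∉ A) → .v i ∉ A := by
      by_cases h : ∃ i, .v i ∉ A
      · exact ⟨h.choose, fun _ => h.choose_spec⟩
      · exact ⟨⟨0, ha⟩, fun h' => absurd h' h⟩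
    obtain ⟨q, hq⟩ : ∃ i, (∃ i, .y i ∉ A) → .y i ∉ A := by
      by_cases h : ∃ i, .y i ∉ A
      · exact ⟨h.choose, fun _ => h.choose_spec⟩
      · exact ⟨⟨0, hb⟩, fun h' => absurd h' h⟩
    obtain ⟨r, hr⟩ : ∃ i, (∃ i, .u i ∉ A) → .u i ∉ A := by
      by_cases h : ∃ i, .u i ∉ A
      · exact ⟨h.choose, fun _ => h.choose_spec⟩
      · exact ⟨⟨0, hb⟩, fun h' => absurd h' h⟩
    have key : ∀ κ : Kind, (κ ≠ vz → κ ≠ vt → .v i ∉ A) → (κ ≠ yu → κ ≠ yt → .y q ∉ A) →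
        (κ ≠ yu → κ ≠ zu → .u r ∉ A) → (κ ≠ vz → κ ≠ zu → .z ∉ A) →
        (κ ≠ yt → κ ≠ vt → .t ∉ A) → 
        ∃ κ : Kind, ∃ s : Idx a b k l, ∀ x ∈ A, ¬ κ.omits s x := by
      intro κ hv hy hu hz ht
      refine ⟨κ, ⟨i, q, r, c⟩, fun x hx ho => ?_⟩
      cases x with
      | v i =>
        obtain ⟨rfl, h1, h2⟩ := ho
        exact hv h1 h2 hx
      | y i =>
        obtain ⟨rfl, h1, h2⟩ := ho
        exact hy h1 h2 hx
      | u i =>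
        obtain ⟨rfl, h1, h2⟩ := ho
        exact hu h1 h2 hx
      | z => exact hz ho.1 ho.2 hx
      | t => exact ht ho.1 ho.2 hx
      | w j i =>
        have : i = c j := ho
        exact hc j (this ▸ hx)
    by_cases hV : ∃ i, .v i ∉ A
    · by_cases hZ : .z ∉ A
      · by_cases hT : .t ∉ A
        · exact key yu (fun _ _ => hi hV) (by simp) (by simp) (fun _ _ => hZ) fun _ _ => hT
        · exact key yt (fun _ _ => hi hV) (by simp) (fun _ _ => hr (h4.resolve_left hT))
            (fun _ _ => hZ) (by simp)
      · exact key zu (fun _ _ => hi hV) (fun _ _ => hq (h2.resolve_right hZ)) (by simp) (by simp)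
          fun _ _ => h3.resolve_left hZ
    · have hY := hq (h1.resolve_left hV)
      have hU := hr (h5.resolve_right hV)
      by_cases hZ : .z ∉ A
      · exact key vt (by simp) (fun _ _ => hY) (fun _ _ => hU) (fun _ _ => hZ) (by simp)
      · exact key vz (by simp) (fun _ _ => hY) (fun _ _ => hU) (by simp)
          fun _ _ => h3.resolve_left hZ

end Labels

section Relations

variable {a b k : ℕ} {l : Fin k → ℕ}

/-- The value attached to a name of one of the vertices `y` and `u`. -/
def nameVal (ψ : Vtx a b k l → ℝ) : Fin b ⊕ Fin b → ℝ :=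
  Sum.elim (fun q => ψ (.y q)) fun r => ψ (.u r)

/-- The linear relations between the vertices. -/
structure VtxRel (α : (j : Fin k) → Fin (l j) → Fin b ⊕ Fin b) (ψ : Vtx a b k l → ℝ) : Prop where
  vy : ∑ i, ψ (.v i) + ∑ q, ψ (.y q) = (a + b - 1 : ℝ) * ψ .t
  yz : ∑ q, ψ (.y q) + ψ .z = ∑ r, ψ (.u r)
  zt : ψ .z + ψ .t = 0
  w : ∀ j, ∑ i, ψ (.w j i) = ∑ m, nameVal ψ (α j m)

variable {α : (j : Fin k) → Fin (l j) → Fin b ⊕ Fin b}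

theorem VtxRel.sub {ψ ψ' : Vtx a b k l → ℝ} (h : VtxRel α ψ) (h' : VtxRel α ψ') :
    VtxRel α (fun x => ψ x - ψ' x) where
  vy := by
    have := h.vy
    have := h'.vy
    simp only [Finset.sum_sub_distrib]
    linarith
  yz := by
    have := h.yz
    have := h'.yz
    simp only [Finset.sum_sub_distrib]
    linarith
  zt := by
    have := h.zt
    have := h'.zt
    linarith
  w j := by
    have hn : ∀ s, nameVal (fun x => ψ x - ψ' x) s = nameVal ψ s - nameVal ψ' s := by
      rintro (q | r) <;> rfl
    simp only [h'.w, h.w, hn, Finset.sum_sub_distrib]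

/-- A modification of `ψ` at the labels selected by `s`, adjusted to satisfy the relations
between the labels `w`. -/
noncomputable def shift (α : (j : Fin k) → Fin (l j) → Fin b ⊕ Fin b) (ψ : Vtx a b k l → ℝ)
    (s : Idx a b k l) (dv dy dz dt du : ℝ) : Vtx a b k l → ℝ
  | .v i => ψ (.v i) + (Pi.single s.i dv : Fin a → ℝ) i
  | .y q => ψ (.y q) + (Pi.single s.q dy : Fin b → ℝ) q
  | .z => ψ .z + dz
  | .t => ψ .t + dt
  | .u r => ψ (.u r) + (Pi.single s.r du : Fin b → ℝ) r
  | .w j i => ψ (.w j i) + (Pi.single (s.c j)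
      (∑ m, Sum.elim (fun q => ψ (.y q) + (Pi.single s.q dy : Fin b → ℝ) q)
        (fun r => ψ (.u r) + (Pi.single s.r du : Fin b → ℝ) r) (α j m) - ∑ i, ψ (.w j i)) :
      Fin (l j + 1) → ℝ) i

theorem rel_shift {ψ : Vtx a b k l → ℝ} {s : Idx a b k l} {dv dy dz dt du : ℝ}
    (h1 : ∑ i, ψ (.v i) + dv + (∑ q, ψ (.y q) + dy) = (a + b - 1 : ℝ) * (ψ .t + dt))
    (h2 : ∑ q, ψ (.y q) + dy + (ψ .z + dz) = ∑ r, ψ (.u r) + du)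
    (h3 : ψ .z + dz + (ψ .t + dt) = 0) : VtxRel α (shift α ψ s dv dy dz dt du) where
  vy := by simpa [shift, Finset.sum_add_distrib] using h1
  yz := by simpa [shift, Finset.sum_add_distrib] using h2
  zt := h3
  w j := by
    simp only [shift, Finset.sum_add_distrib, Finset.sum_pi_single', Finset.mem_univ, if_true,
      add_sub_cancel]
    rfl

theorem single_int {ι : Type*} [DecidableEq ι] {i j : ι} {x : ℝ} (hx : ∃ m : ℤ, x = m) :
    ∃ m : ℤ, (Pi.single i x : ι → ℝ) j = m := by
  obtain ⟨m, rfl⟩ := hx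
  rcases eq_or_ne j i with rfl | h
  · exact ⟨m, by simp⟩
  · exact ⟨0, by simp [h]⟩

theorem add_int {x y : ℝ} (hx : ∃ m : ℤ, x = m) (hy : ∃ m : ℤ, y = m) :
    ∃ m : ℤ, x + y = m := by
  obtain ⟨m, rfl⟩ := hx
  obtain ⟨m', rfl⟩ := hy
  exact ⟨m + m', by push_cast; rfl⟩

theorem sub_int {x y : ℝ} (hx : ∃ m : ℤ, x = m) (hy : ∃ m : ℤ, y = m) :
    ∃ m : ℤ, x - y = m := by
  obtain ⟨m, rfl⟩ := hx
  obtain ⟨m', rfl⟩ := hy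
  exact ⟨m - m', by push_cast; rfl⟩

theorem sum_int {ι : Type*} [Fintype ι] {x : ι → ℝ} (hx : ∀ i, ∃ m : ℤ, x i = m) :
    ∃ m : ℤ, ∑ i, x i = m := by
  choose m hm using hx
  exact ⟨∑ i, m i, by push_cast; exact Finset.sum_congr rfl fun i _ => hm i⟩

theorem shift_int {ψ : Vtx a b k l → ℝ} (hψ : ∀ x, ∃ m : ℤ, ψ x = m) (s : Idx a b k l)
    {dv dy dz dt du : ℝ} (hv : ∃ m : ℤ, dv = m) (hy : ∃ m : ℤ, dy = m) (hz : ∃ m : ℤ, dz = m)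
    (ht : ∃ m : ℤ, dt = m) (hu : ∃ m : ℤ, du = m) (x : Vtx a b k l) :
    ∃ m : ℤ, shift α ψ s dv dy dz dt du x = m := by
  cases x with
  | v i => exact add_int (hψ _) (single_int hv)
  | y i => exact add_int (hψ _) (single_int hy)
  | z => exact add_int (hψ _) hz
  | t => exact add_int (hψ _) ht
  | u i => exact add_int (hψ _) (single_int hu)
  | w j i =>
    refine add_int (hψ _) (single_int (sub_int (sum_int fun m => ?_) (sum_int fun i => hψ _)))
    rcases α j m with q | r
    · exact add_int (hψ _) (single_int hy)
    · exact add_int (hψ _) (single_int hu)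

theorem shift_eq {ψ : Vtx a b k l → ℝ} {κ : Kind} {s : Idx a b k l} {dv dy dz dt du : ℝ}
    (hv : κ = .vz ∨ κ = .vt → dv = 0) (hy : κ = .yu ∨ κ = .yt → dy = 0)
    (hz : κ = .vz ∨ κ = .zu → dz = 0) (ht : κ = .yt ∨ κ = .vt → dt = 0)
    (hu : κ = .yu ∨ κ = .zu → du = 0) (x : Vtx a b k l) (hx : ¬ κ.omits s x) :
    shift α ψ s dv dy dz dt du x = ψ x := by
  cases x with
  | v i =>
    rcases eq_or_ne i s.i with rfl | h
    · simp only [Kind.omits, true_and, ne_eq] at hx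
      simp [shift, hv (by tauto)]
    · simp [shift, h]
  | y i =>
    rcases eq_or_ne i s.q with rfl | h
    · simp only [Kind.omits, true_and, ne_eq] at hx
      simp [shift, hy (by tauto)]
    · simp [shift, h]
  | u i =>
    rcases eq_or_ne i s.r with rfl | h
    · simp only [Kind.omits, true_and, ne_eq] at hx
      simp [shift, hu (by tauto)]
    · simp [shift, h]
  | z =>
    simp only [Kind.omits, ne_eq] at hx
    simp [shift, hz (by tauto)]
  | t =>
    simp only [Kind.omits, ne_eq] at hx
    simp [shift, ht (by tauto)]
  | w j i => simp [shift, show i ≠ s.c j from hx]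

/-- Prescribing values on a facet extends to the remaining labels. -/
theorem exists_rel_eq (α : (j : Fin k) → Fin (l j) → Fin b ⊕ Fin b) (κ : Kind)
    (s : Idx a b k l) (ψ : Vtx a b k l → ℝ) :
    ∃ ψ' : Vtx a b k l → ℝ, VtxRel α ψ' ∧ (∀ x, ¬ κ.omits s x → ψ' x = ψ x) ∧
      ((∀ x, ∃ m : ℤ, ψ x = m) → ∀ x, ∃ m : ℤ, ψ' x = m) := by
  have key : ∀ dv dy dz dt du : ℝ, (κ = .vz ∨ κ = .vt → dv = 0) →
      (κ = .yu ∨ κ = .yt → dy = 0) → (κ = .vz ∨ κ = .zu → dz = 0) →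
      (κ = .yt ∨ κ = .vt → dt = 0) → (κ = .yu ∨ κ = .zu → du = 0) →
      (∑ i, ψ (.v i) + dv + (∑ q, ψ (.y q) + dy) = (a + b - 1 : ℝ) * (ψ .t + dt)) →
      (∑ q, ψ (.y q) + dy + (ψ .z + dz) = ∑ r, ψ (.u r) + du) →
      (ψ .z + dz + (ψ .t + dt) = 0) →
      ((∀ x, ∃ m : ℤ, ψ x = m) → (∃ m : ℤ, dv = m) ∧ (∃ m : ℤ, dy = m) ∧ (∃ m : ℤ, dz = m) ∧
        (∃ m : ℤ, dt = m) ∧ ∃ m : ℤ, du = m) →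
      ∃ ψ' : Vtx a b k l → ℝ, VtxRel α ψ' ∧ (∀ x, ¬ κ.omits s x → ψ' x = ψ x) ∧
      ((∀ x, ∃ m : ℤ, ψ x = m) → ∀ x, ∃ m : ℤ, ψ' x = m) := by
    intro dv dy dz dt du hv hy hz ht hu h1 h2 h3 hinteg
    refine ⟨shift α ψ s dv dy dz dt du, rel_shift h1 h2 h3, shift_eq hv hy hz ht hu, fun h => ?_⟩
    obtain ⟨i1, i2, i3, i4, i5⟩ := hinteg h
    exact shift_int h s i1 i2 i3 i4 i5
  have hI : (∀ x, ∃ m : ℤ, ψ x = m) → ∃ V Y Z T U : ℤ, ∑ i, ψ (.v i) = V ∧ ∑ i, ψ (.y i) = Y ∧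
      ψ .z = Z ∧ ψ .t = T ∧ ∑ i, ψ (.u i) = U := by
    intro h
    obtain ⟨V, hV⟩ := sum_int fun i => h (.v i)
    obtain ⟨Y, hY⟩ := sum_int fun i => h (.y i)
    obtain ⟨U, hU⟩ := sum_int fun i => h (.u i)
    obtain ⟨Z, hZ⟩ := h .z
    obtain ⟨T, hT⟩ := h .t
    exact ⟨V, Y, Z, T, U, hV, hY, hZ, hT, hU⟩
  generalize hV : ∑ i, ψ (.v i) = V at key hI
  generalize hY : ∑ i, ψ (.y i) = Y at key hI
  generalize hU : ∑ i, ψ (.u i) = U at key hI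
  generalize hZ : ψ .z = Z at key hI
  generalize hT : ψ .t = T at key hI
  cases κ with
  | yu =>
    refine key ((a + b - 1 : ℝ) * (Y - U) - V - Y) 0 (U - Y - Z) (-T - (U - Y)) 0 (by simp)
      (by simp) (by simp) (by simp) (by simp) (by ring) (by ring) (by ring) fun h => ?_
    obtain ⟨V, Y, Z, T, U, rfl, rfl, rfl, rfl, rfl⟩ := hI h
    exact ⟨⟨(a + b - 1) * (Y - U) - V - Y, by push_cast; rfl⟩, ⟨0, by simp⟩,
      ⟨U - Y - Z, by push_cast; rfl⟩, ⟨-T - (U - Y), by push_cast; rfl⟩, ⟨0, by simp⟩⟩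
  | vz =>
    refine key 0 (-(a + b - 1 : ℝ) * Z - V - Y) 0 (-Z - T) (-(a + b - 1 : ℝ) * Z - V + Z - U)
      (by simp) (by simp) (by simp) (by simp) (by simp) (by ring) (by ring) (by ring) fun h => ?_
    obtain ⟨V, Y, Z, T, U, rfl, rfl, rfl, rfl, rfl⟩ := hI h
    exact ⟨⟨0, by simp⟩, ⟨-(a + b - 1) * Z - V - Y, by push_cast; rfl⟩, ⟨0, by simp⟩,
      ⟨-Z - T, by push_cast; rfl⟩, ⟨-(a + b - 1) * Z - V + Z - U, by push_cast; rfl⟩⟩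
  | yt =>
    refine key ((a + b - 1 : ℝ) * T - V - Y) 0 (-T - Z) 0 (Y - T - U)
      (by simp) (by simp) (by simp) (by simp) (by simp) (by ring) (by ring) (by ring) fun h => ?_
    obtain ⟨V, Y, Z, T, U, rfl, rfl, rfl, rfl, rfl⟩ := hI h
    exact ⟨⟨(a + b - 1) * T - V - Y, by push_cast; rfl⟩, ⟨0, by simp⟩,
      ⟨-T - Z, by push_cast; rfl⟩, ⟨0, by simp⟩, ⟨Y - T - U, by push_cast; rfl⟩⟩
  | zu =>
    refine key (-(a + b - 1 : ℝ) * Z - V - (U - Z)) (U - Z - Y) 0 (-Z - T) 0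
      (by simp) (by simp) (by simp) (by simp) (by simp) (by ring) (by ring) (by ring) fun h => ?_
    obtain ⟨V, Y, Z, T, U, rfl, rfl, rfl, rfl, rfl⟩ := hI h
    exact ⟨⟨-(a + b - 1) * Z - V - (U - Z), by push_cast; rfl⟩,
      ⟨U - Z - Y, by push_cast; rfl⟩, ⟨0, by simp⟩, ⟨-Z - T, by push_cast; rfl⟩, ⟨0, by simp⟩⟩
  | vt =>
    refine key 0 ((a + b - 1 : ℝ) * T - V - Y) (-T - Z) 0 ((a + b - 1 : ℝ) * T - V - T - U)
      (by simp) (by simp) (by simp) (by simp) (by simp) (by ring) (by ring) (by ring) fun h => ?_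
    obtain ⟨V, Y, Z, T, U, rfl, rfl, rfl, rfl, rfl⟩ := hI h
    exact ⟨⟨0, by simp⟩, ⟨(a + b - 1) * T - V - Y, by push_cast; rfl⟩,
      ⟨-T - Z, by push_cast; rfl⟩, ⟨0, by simp⟩,
      ⟨(a + b - 1) * T - V - T - U, by push_cast; rfl⟩⟩

/-- A solution of the relations vanishing on a facet vanishes. -/
theorem VtxRel.eq_zero {ψ : Vtx a b k l → ℝ} (h : VtxRel α ψ) (κ : Kind) (s : Idx a b k l)
    (h0 : ∀ x, ¬ κ.omits s x → ψ x = 0) (x : Vtx a b k l) : ψ x = 0 := by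
  have hv : ∑ i, ψ (.v i) = ψ (.v s.i) := Fintype.sum_eq_single _ fun i hi =>
    h0 _ (by simp [Kind.omits, hi])
  have hy : ∑ i, ψ (.y i) = ψ (.y s.q) := Fintype.sum_eq_single _ fun i hi =>
    h0 _ (by simp [Kind.omits, hi])
  have hu : ∑ i, ψ (.u i) = ψ (.u s.r) := Fintype.sum_eq_single _ fun i hi =>
    h0 _ (by simp [Kind.omits, hi])
  have hw : ∀ j, ∑ i, ψ (.w j i) = ψ (.w j (s.c j)) := fun j => Fintype.sum_eq_single _ fun i hi =>
    h0 _ (by simp [Kind.omits, hi])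
  have e1 := h.vy
  have e2 := h.yz
  have e3 := h.zt
  rw [hv, hy] at e1
  rw [hy, hu] at e2
  have f1 := h0 (.v s.i)
  have f2 := h0 (.y s.q)
  have f3 := h0 .z
  have f4 := h0 .t
  have f5 := h0 (.u s.r)
  have key : ψ (.v s.i) = 0 ∧ ψ (.y s.q) = 0 ∧ ψ .z = 0 ∧ ψ .t = 0 ∧ ψ (.u s.r) = 0 := by
    cases κ <;> simp [Kind.omits] at f1 f2 f3 f4 f5
    · have hz : ψ .z = 0 := by linarith
      have ht : ψ .t = 0 := by linarith
      rw [ht] at e1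
      exact ⟨by linarith, f2, hz, ht, f5⟩
    · have ht : ψ .t = 0 := by linarith
      rw [ht] at e1
      exact ⟨f1, by linarith, f3, ht, by linarith⟩
    · have hz : ψ .z = 0 := by linarith
      rw [f4] at e1
      exact ⟨by linarith, f2, hz, f4, by linarith⟩
    · have ht : ψ .t = 0 := by linarith
      rw [ht] at e1
      exact ⟨by linarith, by linarith, f3, ht, f5⟩
    · have hz : ψ .z = 0 := by linarith
      rw [f4] at e1
      exact ⟨f1, by linarith, hz, f4, by linarith⟩
  have hy' : ∀ q, ψ (.y q) = 0 := by
    intro i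
    rcases eq_or_ne i s.q with rfl | hi
    · exact key.2.1
    · exact h0 _ (by simp [Kind.omits, hi])
  have hu' : ∀ q, ψ (.u q) = 0 := by
    intro i
    rcases eq_or_ne i s.r with rfl | hi
    · exact key.2.2.2.2
    · exact h0 _ (by simp [Kind.omits, hi])
  cases x with
  | v i =>
    rcases eq_or_ne i s.i with rfl | hi
    · exact key.1
    · exact h0 _ (by simp [Kind.omits, hi])
  | y i => exact hy' i
  | u i => exact hu' i
  | z => exact key.2.2.1
  | t => exact key.2.2.2.1
  | w j i =>
    rcases eq_or_ne i (s.c j) with rfl | hi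
    · rw [← hw, h.w]
      refine Finset.sum_eq_zero fun m _ => ?_
      rcases hm : α j m with q | r
      · exact hy' q
      · exact hu' r
    · exact h0 _ (by simp [Kind.omits, hi])

/-- The solutions of the relations equal to one away from a choice of labels. -/
noncomputable def fval (α : (j : Fin k) → Fin (l j) → Fin b ⊕ Fin b) (T Y : ℝ)
    (s : Idx a b k l) : Vtx a b k l → ℝ :=
  shift α (fun _ => 1) s ((a + b - 1 : ℝ) * (T - 1) - Y) (Y - 1) (-T - 1) (T - 1) (Y - T - 1)

theorem rel_fval (T Y : ℝ) (s : Idx a b k l) : VtxRel α (fval α T Y s) := by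
  apply rel_shift
  · simp
    ring
  · simp
    ring
  · ring

section

variable (T Y : ℝ) (s : Idx a b k l)

theorem fval_v (i : Fin a) : fval α T Y s (.v i) =
    1 + (Pi.single s.i ((a + b - 1 : ℝ) * (T - 1) - Y) : Fin a → ℝ) i := rfl

theorem fval_y (i : Fin b) : fval α T Y s (.y i) =
    1 + (Pi.single s.q (Y - 1) : Fin b → ℝ) i := rfl

theorem fval_u (i : Fin b) : fval α T Y s (.u i) =
    1 + (Pi.single s.r (Y - T - 1) : Fin b → ℝ) i := rfl

theorem fval_z : fval α T Y s .z = -T := by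
  simp [fval, shift]

theorem fval_t : fval α T Y s .t = T := by
  simp [fval, shift]

theorem fval_w (j : Fin k) (i : Fin (l j + 1)) : fval α T Y s (.w j i) =
    1 + (Pi.single (s.c j) (∑ m, (nameVal (fval α T Y s) (α j m) - 1) - 1) :
      Fin (l j + 1) → ℝ) i := by
  have : ∑ m, (nameVal (fval α T Y s) (α j m) - 1) - 1 =
    ∑ m, nameVal (fval α T Y s) (α j m) - ∑ i : Fin (l j + 1), (1 : ℝ) := by
    simp
    ring
  rw [this]
  rfl

end

theorem add_single_le {ι : Type*} [DecidableEq ι] {i j : ι} {x : ℝ} (hx : x ≤ 0) :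
    1 + (Pi.single i x : ι → ℝ) j ≤ 1 := by
  rcases eq_or_ne j i with rfl | h
  · simpa
  · simp [h]

theorem add_single_eq_iff {ι : Type*} [DecidableEq ι] {i j : ι} {x : ℝ} :
    1 + (Pi.single i x : ι → ℝ) j = 1 ↔ j = i → x = 0 := by
  rcases eq_or_ne j i with rfl | h
  · simp
  · simp [h]

theorem nameVal_fval_le {T Y : ℝ} {s : Idx a b k l} (hY : Y ≤ 1) (hU : Y - T ≤ 1)
    (e : Fin b ⊕ Fin b) : nameVal (fval α T Y s) e ≤ 1 := by
  rcases e with q | r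
  · exact add_single_le (by linarith)
  · exact add_single_le (by linarith)

theorem sum_name_sub_le {T Y : ℝ} {s : Idx a b k l} (hY : Y ≤ 1) (hU : Y - T ≤ 1) (j : Fin k) :
    ∑ m, (nameVal (fval α T Y s) (α j m) - 1) ≤ 0 :=
  Finset.sum_nonpos fun _ _ => sub_nonpos.2 (nameVal_fval_le hY hU _)

theorem fval_w_eq_one_iff {T Y : ℝ} {s : Idx a b k l} (hY : Y ≤ 1) (hU : Y - T ≤ 1) {j : Fin k}
    {i : Fin (l j + 1)} : fval α T Y s (.w j i) = 1 ↔ i ≠ s.c j := by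
  have := sum_name_sub_le (α := α) (s := s) hY hU j
  rw [fval_w, add_single_eq_iff]
  refine forall_congr' fun _ => ?_
  simp only [iff_false]
  intro h
  linarith

theorem fval_w_le {T Y : ℝ} {s : Idx a b k l} (hY : Y ≤ 1) (hU : Y - T ≤ 1) (j : Fin k)
    (i : Fin (l j + 1)) : fval α T Y s (.w j i) ≤ 1 := by
  have := sum_name_sub_le (α := α) (s := s) hY hU j
  rw [fval_w]
  exact add_single_le (by linarith)

/-- The value of `t` on the facets. -/
def Kind.T : Kind → ℝ
  | yu => 0
  | vz => -1
  | yt => 1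
  | zu => -1
  | vt => 1

/-- The value of the distinguished `y` on the facets. -/
def Kind.Y (a b : ℕ) : Kind → ℝ
  | yu => 1
  | vz => -2 * (a + b - 1)
  | yt => 1
  | zu => 0
  | vt => 0

/-- The values of the facet functionals. -/
noncomputable def facetVal (α : (j : Fin k) → Fin (l j) → Fin b ⊕ Fin b) (κ : Kind)
    (s : Idx a b k l) : Vtx a b k l → ℝ := fval α κ.T (κ.Y a b) s

theorem facetVal_spec (ha : 2 ≤ a) (κ : Kind) (s : Idx a b k l) (x : Vtx a b k l) :
    facetVal α κ s x ≤ 1 ∧ (facetVal α κ s x = 1 ↔ ¬ κ.omits s x) := by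
  have ha' : (2 : ℝ) ≤ a := by exact_mod_cast ha
  have hb' : (1 : ℝ) ≤ b := by exact_mod_cast s.q.pos
  have hY : κ.Y a b ≤ 1 := by
    cases κ <;> simp only [Kind.Y] <;> linarith
  have hU : κ.Y a b - κ.T ≤ 1 := by
    cases κ <;> simp only [Kind.Y, Kind.T] <;> linarith
  cases x with
  | v i =>
    rw [facetVal, fval_v, add_single_eq_iff]
    refine ⟨add_single_le ?_, ?_⟩
    · cases κ <;> simp only [Kind.Y, Kind.T] <;> linarith
    · simp only [Kind.omits, not_and]
      refine forall_congr' fun _ => ?_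
      cases κ <;> simp only [Kind.Y, Kind.T, ne_eq, reduceCtorEq, not_false_eq_true,
        not_true_eq_false, forall_const, iff_true, iff_false, imp_false]
      · intro h; linarith
      · ring
      · intro h; linarith
      · intro h; linarith
      · ring
  | y i =>
    rw [facetVal, fval_y, add_single_eq_iff]
    refine ⟨add_single_le (by linarith), ?_⟩
    simp only [Kind.omits, not_and]
    refine forall_congr' fun _ => ?_
    cases κ <;> simp [Kind.Y]
    intro h; linarith
  | u i =>
    rw [facetVal, fval_u, add_single_eq_iff]
    refine ⟨add_single_le (by linarith), ?_⟩
    simp only [Kind.omits, not_and]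
    refine forall_congr' fun _ => ?_
    cases κ <;> simp [Kind.Y, Kind.T]
    · intro h; linarith
    · norm_num
  | z =>
    rw [facetVal, fval_z]
    cases κ <;> simp [Kind.T, Kind.omits] <;> norm_num
  | t =>
    rw [facetVal, fval_t]
    cases κ <;> simp [Kind.T, Kind.omits] <;> norm_num
  | w j i => exact ⟨fval_w_le hY hU j i, fval_w_eq_one_iff hY hU⟩

end Relations

section Realizations

variable {n a b k : ℕ} {l : Fin k → ℕ} {α : (j : Fin k) → Fin (l j) → Fin b ⊕ Fin b}

/-- A configuration of lattice points for which the relations are the only ones, and which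
generates the lattice. -/
structure Realization (α : (j : Fin k) → Fin (l j) → Fin b ⊕ Fin b)
    (p : Vtx a b k l → Fin n → ℝ) : Prop where
  lattice : ∀ x, IsLatticePoint (p x)
  rel : ∀ f : (Fin n → ℝ) →ₗ[ℝ] ℝ, VtxRel α fun x => f (p x)
  ext : ∀ ψ : Vtx a b k l → ℝ, VtxRel α ψ → ∃ f : (Fin n → ℝ) →ₗ[ℝ] ℝ, ∀ x, f (p x) = ψ x
  sep : ∀ f : (Fin n → ℝ) →ₗ[ℝ] ℝ, (∀ x, f (p x) = 0) → f = 0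
  int : ∀ f : (Fin n → ℝ) →ₗ[ℝ] ℝ, (∀ x, ∃ m : ℤ, f (p x) = m) → LatticeIntegral f

theorem exists_realization (α : (j : Fin k) → Fin (l j) → Fin b ⊕ Fin b) (ha : 2 ≤ a)
    (hb : 1 ≤ b) (hn : n = a + 2 * b - 1 + ∑ j, l j) :
    ∃ p : Vtx a b k l → Fin n → ℝ, Realization α p := by
  classical
  let s : Idx a b k l := ⟨⟨0, by omega⟩, ⟨0, hb⟩, ⟨0, hb⟩, fun _ => 0⟩
  let J := {x : Vtx a b k l // ¬ Kind.yu.omits s x}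
  have hcompl : Fintype.card {x : Vtx a b k l // Kind.yu.omits s x} = k + 3 := by
    have e : {x : Vtx a b k l // Kind.yu.omits s x} ≃ Fin 3 ⊕ Fin k := by
      refine (Equiv.ofBijective (fun x : Fin 3 ⊕ Fin k => match x with
        | .inl 0 => ⟨.v s.i, by simp [Kind.omits]⟩
        | .inl 1 => ⟨.z, by simp [Kind.omits]⟩
        | .inl 2 => ⟨.t, by simp [Kind.omits]⟩
        | .inr j => ⟨.w j (s.c j), by simp [Kind.omits]⟩) ⟨?_, ?_⟩).symm
      · rintro (i | j) (i' | j') h <;> replace h := congrArg Subtype.val h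
        · fin_cases i <;> fin_cases i' <;> first | rfl | cases h
        · fin_cases i <;> cases h
        · fin_cases i' <;> cases h
        · rw [(Vtx.w.inj h).1]
      · rintro ⟨x, hx⟩
        cases x with
        | v i =>
          obtain ⟨rfl, -⟩ := hx
          exact ⟨.inl 0, rfl⟩
        | y q => simp [Kind.omits] at hx
        | u q => simp [Kind.omits] at hx
        | z => exact ⟨.inl 1, rfl⟩
        | t => exact ⟨.inl 2, rfl⟩
        | w j i =>
          have : i = s.c j := hx
          subst this
          exact ⟨.inr j, rfl⟩
    rw [Fintype.card_congr e]
    simp [add_comm]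
  have hcard : Fintype.card J = n := by
    rw [Fintype.card_subtype_compl, hcompl, Vtx.card_eq]
    omega
  let ε : J ≃ Fin n := Fintype.equivFinOfCardEq hcard
  choose e he1 he2 he3 using fun ψ : Vtx a b k l → ℝ => exists_rel_eq α .yu s ψ
  let δ : J → Vtx a b k l → ℝ := fun κ x => if x = κ then 1 else 0
  have hδ : ∀ κ x, ∃ m : ℤ, δ κ x = m := by
    intro κ x
    by_cases h : x = κ
    · exact ⟨1, by simp [δ, h]⟩
    · exact ⟨0, by simp [δ, h]⟩
  let p : Vtx a b k l → Fin n → ℝ := fun x i => e (δ (ε.symm i)) x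
  have hpJ : ∀ κ : J, p κ = Pi.single (ε κ) 1 := by
    intro κ
    ext i
    simp only [p]
    rw [he2 _ _ κ.2]
    rcases eq_or_ne i (ε κ) with rfl | hi
    · simp [δ]
    · have : ¬ ((κ : Vtx a b k l) = (ε.symm i : Vtx a b k l)) := fun h => hi (by
        rw [Subtype.ext h]
        simp)
      simp [δ, this, hi]
  have hrel : ∀ f : (Fin n → ℝ) →ₗ[ℝ] ℝ, VtxRel α fun x => f (p x) := by
    intro f
    have hr : ∀ i, VtxRel α fun x => p x i := fun i => he1 _
    have h1 : ∑ i, p (.v i) + ∑ q, p (.y q) = (a + b - 1 : ℝ) • p .t := by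
      ext i
      simpa [Finset.sum_apply] using (hr i).vy
    have h2 : ∑ q, p (.y q) + p .z = ∑ r, p (.u r) := by
      ext i
      simpa [Finset.sum_apply] using (hr i).yz
    have h3 : p .z + p .t = 0 := by
      ext i
      exact (hr i).zt
    have h4 : ∀ j, ∑ i, p (.w j i) =
        ∑ m, Sum.elim (fun q => p (.y q)) (fun r => p (.u r)) (α j m) := by
      intro j
      ext i
      have hs : ∀ o, Sum.elim (fun q => p (.y q)) (fun r => p (.u r)) o i =
          nameVal (fun x => p x i) o := by
        rintro (q | r) <;> rfl
      simpa [Finset.sum_apply, hs] using (hr i).w j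
    have hs : ∀ o, nameVal (fun x => f (p x)) o =
        f (Sum.elim (fun q => p (.y q)) (fun r => p (.u r)) o) := by
      rintro (q | r) <;> rfl
    constructor
    · simpa using congrArg f h1
    · simpa using congrArg f h2
    · simpa using congrArg f h3
    · intro j
      simpa [hs] using congrArg f (h4 j)
  have hsing : ∀ i, Pi.single i 1 = p (ε.symm i) := fun i => by simp [hpJ]
  refine ⟨p, fun x i => he3 _ (hδ _) x, hrel, fun ψ hψ => ?_, fun f hf => ?_, fun f hf x hx => ?_⟩
  · let f : (Fin n → ℝ) →ₗ[ℝ] ℝ := ∑ i, ψ (ε.symm i) • LinearMap.proj i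
    refine ⟨f, fun x => sub_eq_zero.1 (((hrel f).sub hψ).eq_zero .yu s (fun x hx => ?_) x)⟩
    rw [sub_eq_zero]
    have := hpJ ⟨x, hx⟩
    simp only at this
    rw [this]
    simp [f, Pi.single_apply]
  · refine LinearMap.pi_ext' fun i => LinearMap.ext_ring ?_
    simp only [LinearMap.comp_apply, LinearMap.single_apply, hsing, hf, LinearMap.zero_apply]
  · choose m hm using hf
    choose c hc using hx
    refine ⟨∑ i, c i * m (ε.symm i), ?_⟩
    rw [LinearMap.pi_apply_eq_sum_univ f]
    push_cast
    refine Finset.sum_congr rfl fun i _ => ?_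
    rw [hc, smul_eq_mul, ← hm, ← hsing]
    congr 2
    ext q
    simp [Pi.single_apply, eq_comm]

namespace Realization

variable {p : Vtx a b k l → Fin n → ℝ}

/-- The functional of a facet. -/
noncomputable def facet (hp : Realization α p) (φ : Kind × Idx a b k l) :
    (Fin n → ℝ) →ₗ[ℝ] ℝ := (hp.ext _ (rel_fval φ.1.T (φ.1.Y a b) φ.2)).choose

theorem facet_apply (hp : Realization α p) (φ : Kind × Idx a b k l) (x : Vtx a b k l) :
    hp.facet φ (p x) = facetVal α φ.1 φ.2 x :=
  (hp.ext _ (rel_fval φ.1.T (φ.1.Y a b) φ.2)).choose_spec x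

theorem facet_eq_one_iff (hp : Realization α p) (ha : 2 ≤ a) (φ : Kind × Idx a b k l)
    (x : Vtx a b k l) : hp.facet φ (p x) = 1 ↔ ¬ φ.1.omits φ.2 x := by
  rw [facet_apply]
  exact (facetVal_spec ha _ _ _).2

theorem eq_zero_of_facet (hp : Realization α p) (κ : Kind) (s : Idx a b k l)
    {g : (Fin n → ℝ) →ₗ[ℝ] ℝ} (hg : ∀ x, ¬ κ.omits s x → g (p x) = 0) : g = 0 :=
  hp.sep g ((hp.rel g).eq_zero κ s hg)

theorem exists_dual (hp : Realization α p) (κ : Kind) (s : Idx a b k l) {x : Vtx a b k l}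
    (hx : ¬ κ.omits s x) : ∃ g : (Fin n → ℝ) →ₗ[ℝ] ℝ, LatticeIntegral g ∧ g (p x) = 1 ∧
      ∀ x', ¬ κ.omits s x' → x' ≠ x → g (p x') = 0 := by
  classical
  obtain ⟨ψ, hψ, h1, h2⟩ := exists_rel_eq α κ s fun x' => if x' = x then 1 else 0
  obtain ⟨g, hg⟩ := hp.ext ψ hψ
  refine ⟨g, hp.int g fun x' => ?_, by rw [hg, h1 x hx, if_pos rfl], fun x' hx' hne => by
    rw [hg, h1 x' hx', if_neg hne]⟩
  rw [hg]
  refine h2 (fun x' => ?_) x'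
  by_cases h : x' = x
  · exact ⟨1, by simp [h]⟩
  · exact ⟨0, by simp [h]⟩

theorem facetSystem (hp : Realization α p) (ha : 2 ≤ a) (hb : 1 ≤ b) (hl : ∀ j, 1 ≤ l j) :
    FacetSystem p hp.facet where
  lattice := hp.lattice
  le_one φ x := by
    rw [facet_apply]
    exact (facetVal_spec ha _ _ _).1
  dual φ x hx := by
    simp only [hp.facet_eq_one_iff ha] at hx ⊢
    exact hp.exists_dual φ.1 φ.2 hx
  sep φ g hg := by
    simp only [hp.facet_eq_one_iff ha] at hg
    exact hp.eq_zero_of_facet φ.1 φ.2 hg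
  wall φ x hx := by
    rw [hp.facet_eq_one_iff ha] at hx
    obtain ⟨κ', s', h1, h2⟩ := φ.1.exists_wall φ.2 x hx
    refine ⟨(κ', s'), lt_of_le_of_ne ?_ ?_, fun x' hne hx' => ?_⟩
    · rw [facet_apply]
      exact (facetVal_spec ha _ _ _).1
    · rw [Ne, hp.facet_eq_one_iff ha]
      exact not_not.2 h1
    · rw [hp.facet_eq_one_iff ha] at hx' ⊢
      exact h2 x' hne hx'
  cover x := by
    obtain ⟨κ, s, h⟩ := Kind.exists_not_omits ha hb hl x
    exact ⟨(κ, s), (hp.facet_eq_one_iff ha _ _).2 h⟩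

end Realization

theorem nonempty_facets (k : ℕ) (l : Fin k → ℕ) (ha : 2 ≤ a) (hb : 1 ≤ b) :
    Nonempty (Kind × Idx a b k l) :=
  ⟨.yu, ⟨⟨0, by omega⟩, ⟨0, hb⟩, ⟨0, hb⟩, fun _ => 0⟩⟩

end Realizations

section Removal

variable {n a b k : ℕ} {l : Fin k → ℕ} {α : (j : Fin k) → Fin (l j) → Fin b ⊕ Fin b}
  {p : Vtx a b k l → Fin n → ℝ} {Q : Set (Fin n → ℝ)}

/-- The vertex with a given name. -/
def nameVtx (a k : ℕ) {b : ℕ} (l : Fin k → ℕ) : Fin b ⊕ Fin b → Vtx a b k l :=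
  Sum.elim .y .u

theorem nameVal_eq (ψ : Vtx a b k l → ℝ) (o : Fin b ⊕ Fin b) :
    nameVal ψ o = ψ (nameVtx a k l o) := by
  rcases o with q | r <;> rfl

namespace Realization

theorem not_pos_of_removal (hp : Realization α p) (hQ : IsSmoothFano Q) {x : Vtx a b k l}
    (hV : vertexSet Q ⊆ p '' {x}ᶜ) {ψ : Vtx a b k l → ℝ} (hψ : VtxRel α ψ)
    (h0 : ∀ x' ≠ x, 0 ≤ ψ x') (x' : Vtx a b k l) : ψ x' = 0 := by
  obtain ⟨f, hf⟩ := hp.ext ψ hψ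
  have : f = 0 := hQ.eq_zero_of_vertexSet fun q hq => by
    obtain ⟨x', hx', rfl⟩ := hV hq
    rw [hf]
    exact h0 x' hx'
  rw [← hf, this, LinearMap.zero_apply]

theorem not_removal_v (hp : Realization α p) (ha : 2 ≤ a) (hQ : IsSmoothFano Q) {i : Fin a}
    (hV : vertexSet Q ⊆ p '' {.v i}ᶜ) : False := by
  have : Nontrivial (Fin a) := Fin.nontrivial_iff_two_le.2 ha
  obtain ⟨i', hi'⟩ := exists_ne i
  let ψ : Vtx a b k l → ℝ
    | .v m => (Pi.single i' 1 - Pi.single i 1 : Fin a → ℝ) m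
    | _ => 0
  have h := hp.not_pos_of_removal hQ hV (ψ := ψ) ⟨by simp [ψ], by simp [ψ], by simp [ψ],
    fun j => by simp [ψ, nameVal_eq, nameVtx]; exact (Finset.sum_eq_zero fun m _ => by
      rcases α j m with q | r <;> rfl).symm⟩ (fun x' hx' => by
      cases x' with
      | v m =>
        have : m ≠ i := fun h => hx' (h ▸ rfl)
        simp only [ψ, Pi.sub_apply, Pi.single_eq_of_ne this, sub_zero]
        exact (Pi.single_nonneg.2 (zero_le_one' ℝ) : 0 ≤ (Pi.single i' 1 : _ → ℝ)) m
      | _ => exact le_rfl) (.v i')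
  simp [ψ, hi'] at h

theorem not_removal_w (hp : Realization α p) (hl : ∀ j, 1 ≤ l j) (hQ : IsSmoothFano Q)
    {j : Fin k} {i : Fin (l j + 1)} (hV : vertexSet Q ⊆ p '' {.w j i}ᶜ) : False := by
  have := hl j
  have : Nontrivial (Fin (l j + 1)) := Fin.nontrivial_iff_two_le.2 (by omega)
  obtain ⟨i', hi'⟩ := exists_ne i
  let B : (j : Fin k) → Fin (l j + 1) → ℝ :=
    Function.update 0 j (Pi.single i' 1 - Pi.single i 1)
  have hB : ∀ j, ∑ i, B j i = 0 := by
    intro j'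
    rcases eq_or_ne j' j with rfl | h
    · simp [B]
    · simp [B, Function.update_of_ne h]
  let ψ : Vtx a b k l → ℝ
    | .w j m => B j m
    | _ => 0
  have h := hp.not_pos_of_removal hQ hV (ψ := ψ) ⟨by simp [ψ], by simp [ψ], by simp [ψ],
    fun j => (hB j).trans (Finset.sum_eq_zero fun m _ => by
      rcases α j m with q | r <;> rfl).symm⟩ (fun x' hx' => by
      cases x' with
      | w j' m =>
        simp only [ψ, B]
        rcases eq_or_ne j' j with rfl | h
        · have : m ≠ i := fun h => hx' (h ▸ rfl)
          simp only [Function.update_self, Pi.sub_apply, Pi.single_eq_of_ne this, sub_zero]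
          exact (Pi.single_nonneg.2 (zero_le_one' ℝ) : 0 ≤ (Pi.single i' 1 : _ → ℝ)) m
        · simp [Function.update_of_ne h]
      | _ => exact le_rfl) (.w j i')
  simp [ψ, B, hi'] at h

theorem not_removal_z (hp : Realization α p) (ha : 2 ≤ a) (hb : 1 ≤ b) (hQ : IsSmoothFano Q)
    (hV : vertexSet Q ⊆ p '' {.z}ᶜ) : False := by
  let i : Fin a := ⟨0, by omega⟩
  let r : Fin b := ⟨0, hb⟩
  have hnn : ∀ {m : ℕ} (i j : Fin m), 0 ≤ 1 - (Pi.single i 1 : Fin m → ℝ) j := by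
    intro m i j
    rcases eq_or_ne j i with rfl | h
    · simp
    · simp [h]
  let A : Fin b ⊕ Fin b → ℝ := Sum.elim (fun _ => 1) fun m => 1 - (Pi.single r 1 : Fin b → ℝ) m
  have hA : ∀ o, 0 ≤ A o := by
    rintro (q | m)
    · exact zero_le_one
    · exact hnn _ _
  let ψ : Vtx a b k l → ℝ
    | .v m => 1 - (Pi.single i 1 : Fin a → ℝ) m
    | .y _ => 1
    | .z => -1
    | .t => 1
    | .u m => 1 - (Pi.single r 1 : Fin b → ℝ) m
    | .w j _ => (∑ m, A (α j m)) / (l j + 1)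
  have h := hp.not_pos_of_removal hQ hV (ψ := ψ) ⟨?_, ?_, ?_, ?_⟩ ?_ .t
  · simp [ψ] at h
  · simp [ψ]
    ring
  · simp [ψ]
    ring
  · simp [ψ]
  · intro j
    simp only [ψ, Finset.sum_const, Finset.card_univ, Fintype.card_fin, nsmul_eq_mul]
    push_cast
    rw [mul_div_cancel₀ _ (by positivity)]
    rfl
  · intro x' hx'
    cases x' with
    | v m => exact hnn _ _
    | y m => exact zero_le_one
    | z => exact absurd rfl hx'
    | t => exact zero_le_one
    | u m => exact hnn _ _
    | w j m => exact div_nonneg (Finset.sum_nonneg fun m _ => hA _) (by positivity)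

theorem not_removal_t (hp : Realization α p) (ha : 2 ≤ a) (hb : 1 ≤ b) (hn : 0 < n)
    (hQ : IsSmoothFano Q) (hV : vertexSet Q = p '' {.t}ᶜ) : False := by
  let s : Idx a b k l := ⟨⟨0, by omega⟩, ⟨0, hb⟩, ⟨0, hb⟩, fun _ => 0⟩
  have hN : (2 : ℝ) ≤ a + b - 1 := by
    have ha' : (2 : ℝ) ≤ a := by exact_mod_cast ha
    have hb' : (1 : ℝ) ≤ b := by exact_mod_cast hb
    linarith
  set N : ℝ := a + b - 1 with hNdef
  have hNi : 0 < N⁻¹ := by positivity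
  obtain ⟨f, hf⟩ := hp.ext _ (rel_fval (1 + N⁻¹) 1 s)
  have hv : ∀ i, f (p (.v i)) = 1 := by
    intro i
    rw [hf, fval_v, ← hNdef, add_sub_cancel_left, mul_inv_cancel₀ (by linarith)]
    simp
  have hy : ∀ i, f (p (.y i)) = 1 := by
    intro i
    rw [hf, fval_y]
    simp
  have hz : f (p .z) = -(1 + N⁻¹) := by rw [hf, fval_z]
  have hinteg := hQ.integral_of_supporting hn (f := f) ?_ ?_
  · obtain ⟨m, hm⟩ := hinteg _ (hp.lattice .z)
    rw [hz] at hm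
    have h1 : N⁻¹ < 1 := inv_lt_one_of_one_lt₀ (by linarith)
    have h2 : (-2 : ℝ) < m := by linarith
    have h3 : (m : ℝ) < -1 := by linarith
    have h2' : -2 < m := by exact_mod_cast h2
    have h3' : m < -1 := by exact_mod_cast h3
    omega
  · rw [hV]
    rintro _ ⟨x, hx, rfl⟩
    cases x with
    | v i => exact (hv i).le
    | y i => exact (hy i).le
    | z => rw [hz]; linarith
    | t => exact absurd rfl hx
    | u r =>
      rw [hf, fval_u]
      exact add_single_le (by linarith)
    | w j i =>
      rw [hf]
      exact fval_w_le le_rfl (by linarith) j i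
  · rw [hV]
    intro g hg
    have hg' : ∀ x, x ≠ .t → f (p x) = 1 → g (p x) = 0 := fun x hx h => hg _ ⟨x, hx, rfl⟩ h
    have hgv : ∀ i, g (p (.v i)) = 0 := fun i => hg' _ (by simp) (hv i)
    have hgy : ∀ i, g (p (.y i)) = 0 := fun i => hg' _ (by simp) (hy i)
    have h1 := (hp.rel g).vy
    simp only [hgv, hgy, Finset.sum_const_zero, add_zero, ← hNdef] at h1
    have hgt : g (p .t) = 0 := (mul_eq_zero.1 h1.symm).resolve_left (by linarith)
    have hgz : g (p .z) = 0 := by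
      have := (hp.rel g).zt
      linarith
    refine hp.eq_zero_of_facet .vz s fun x hx => ?_
    cases x with
    | v i => exact hgv i
    | y i => exact hgy i
    | z => exact hgz
    | t => exact hgt
    | u r =>
      have hr : r ≠ s.r := by simpa [Kind.omits] using hx
      refine hg' _ (by simp) ?_
      rw [hf, fval_u]
      simp [hr]
    | w j i =>
      refine hg' _ (by simp) ?_
      rw [hf]
      exact (fval_w_eq_one_iff le_rfl (by linarith)).2 hx

theorem eq_zero_of_name (hp : Realization α p) (s : Idx a b k l) {e : Fin b ⊕ Fin b} {j : Fin k}
    (he : ∃ m, α j m = e) {g : (Fin n → ℝ) →ₗ[ℝ] ℝ} (hv : ∀ i ≠ s.i, g (p (.v i)) = 0)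
    (ho : ∀ o ≠ e, g (p (nameVtx a k l o)) = 0) (hw : ∀ j, ∀ i ≠ s.c j, g (p (.w j i)) = 0)
    (hwj : ∀ i, g (p (.w j i)) = 0) : g = 0 := by
  classical
  have h1 := (hp.rel g).w j
  simp only [hwj, Finset.sum_const_zero, nameVal_eq] at h1
  have h2 : ∑ m, g (p (nameVtx a k l (α j m))) =
      ∑ m with α j m = e, g (p (nameVtx a k l e)) := by
    rw [Finset.sum_filter]
    refine Finset.sum_congr rfl fun m _ => ?_
    split_ifs with h
    · rw [h]
    · exact ho _ h
  rw [h2, Finset.sum_const, nsmul_eq_mul] at h1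
  have h3 : g (p (nameVtx a k l e)) = 0 := by
    refine (mul_eq_zero.1 h1.symm).resolve_left ?_
    obtain ⟨m, hm⟩ := he
    exact Nat.cast_ne_zero.2 (Finset.card_ne_zero.2 ⟨m, by simpa using hm⟩)
  have h4 : ∀ o, g (p (nameVtx a k l o)) = 0 := fun o => by
    rcases eq_or_ne o e with rfl | h
    · exact h3
    · exact ho o h
  refine hp.eq_zero_of_facet .yu s fun x hx => ?_
  cases x with
  | v i => exact hv i (by simpa [Kind.omits] using hx)
  | y q => exact h4 (.inl q)
  | z => simp [Kind.omits] at hx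
  | t => simp [Kind.omits] at hx
  | u r => exact h4 (.inr r)
  | w j i => exact hw j i hx

theorem not_removal_name (hp : Realization α p) (ha : 2 ≤ a) (hb : 1 ≤ b) (hn : 0 < n)
    (hα : ∀ s : Fin b ⊕ Fin b, ∃ j i, α j i = s) (hinj : Function.Injective p)
    (hQ : IsSmoothFano Q) (e : Fin b ⊕ Fin b)
    (hV : vertexSet Q = p '' {nameVtx a k l e}ᶜ) : False := by
  classical
  let i0 : Fin a := ⟨0, by omega⟩
  let q0 : Fin b := ⟨0, hb⟩
  let mult : Fin k → ℕ := fun j => Finset.card {m | α j m = e}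
  obtain ⟨j1, m1, hjm⟩ := hα e
  have : Nonempty (Fin k) := ⟨j1⟩
  obtain ⟨j, hj⟩ := Finite.exists_max mult
  have hpos : 0 < mult j :=
    lt_of_lt_of_le (Finset.card_pos.2 ⟨m1, by simpa using hjm⟩) (hj j1)
  have he : ∃ m, α j m = e := by
    obtain ⟨m, hm⟩ := Finset.card_pos.1 hpos
    exact ⟨m, by simpa using hm⟩
  have hposR : (0 : ℝ) < mult j := by exact_mod_cast hpos
  have hleR : (1 : ℝ) ≤ mult j := by exact_mod_cast hpos
  set ε : ℝ := (mult j : ℝ)⁻¹ with hε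
  have hε0 : 0 < ε := inv_pos.2 hposR
  have hε1 : ε ≤ 1 := inv_le_one_of_one_le₀ hleR
  have hN : (2 : ℝ) ≤ a + b - 1 := by
    have ha' : (2 : ℝ) ≤ a := by exact_mod_cast ha
    have hb' : (1 : ℝ) ≤ b := by exact_mod_cast hb
    linarith
  obtain ⟨T, Y, s, τ, hT, hdv, hname, hτ, hτe, hτo⟩ : ∃ T Y : ℝ, ∃ s : Idx a b k l,
      ∃ τ : Vtx a b k l, (|T| ≤ 1) ∧ (a + b - 1 : ℝ) * (T - 1) - Y ≤ 0 ∧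
      (∀ o, fval α T Y s (nameVtx a k l o) = 1 + if o = e then ε else 0) ∧
      fval α T Y s τ = ε ∧ τ ≠ nameVtx a k l e ∧ (τ = .z ∨ τ = .t) := by
    rcases e with q | r
    · refine ⟨ε, 1 + ε, ⟨i0, q, q0, fun _ => 0⟩, .t, abs_le.2 ⟨by linarith, hε1⟩,
        by nlinarith, ?_, fval_t _ _ _, by simp [nameVtx], .inr rfl⟩
      rintro (q' | r')
      · simp [nameVtx, fval_y, Pi.single_apply]
      · simp [nameVtx, fval_u]
    · refine ⟨-ε, 1, ⟨i0, q0, r, fun _ => 0⟩, .z, abs_le.2 ⟨by linarith, by linarith⟩,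
        by nlinarith, ?_, by rw [fval_z, neg_neg], by simp [nameVtx], .inl rfl⟩
      rintro (q' | r')
      · simp [nameVtx, fval_y]
      · simp [nameVtx, fval_u, Pi.single_apply]
  obtain ⟨f, hf⟩ := hp.ext _ (rel_fval T Y s)
  have hv : ∀ i ≠ s.i, f (p (.v i)) = 1 := fun i hi => by
    rw [hf, fval_v]
    simp [hi]
  have ho : ∀ o ≠ e, f (p (nameVtx a k l o)) = 1 := fun o ho => by simp [hf, hname, ho]
  have hwv : ∀ j' i, f (p (.w j' i)) =
      1 + (Pi.single (s.c j') (mult j' * ε - 1) : Fin (l j' + 1) → ℝ) i := by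
    intro j' i
    rw [hf, fval_w]
    congr 3
    have : ∀ m, nameVal (fval α T Y s) (α j' m) - 1 = if α j' m = e then ε else 0 := fun m => by
      rw [nameVal_eq, hname, add_sub_cancel_left]
    rw [Finset.sum_congr rfl fun m _ => this m, ← Finset.sum_filter, Finset.sum_const,
      nsmul_eq_mul]
  have hw : ∀ j, ∀ i ≠ s.c j, f (p (.w j i)) = 1 := fun j i hi => by simp [hwv, hi]
  have hwj : ∀ i, f (p (.w j i)) = 1 := fun i => by
    rw [hwv, hε, mul_inv_cancel₀ hposR.ne']
    simp
  have hle : ∀ q ∈ vertexSet Q, f q ≤ 1 := by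
    rw [hV]
    rintro _ ⟨x, hx, rfl⟩
    have hne : ∀ o, x = nameVtx a k l o → o ≠ e := by
      rintro o rfl rfl
      exact hx rfl
    cases x with
    | v i =>
      rw [hf, fval_v]
      exact add_single_le hdv
    | y q => exact (ho (.inl q) (hne _ rfl)).le
    | u q => exact (ho (.inr q) (hne _ rfl)).le
    | z =>
      rw [hf, fval_z]
      linarith [neg_le_of_abs_le hT]
    | t =>
      rw [hf, fval_t]
      exact le_of_abs_le hT
    | w j' i =>
      rw [hwv]
      refine add_single_le ?_
      have : (mult j' : ℝ) ≤ mult j := by exact_mod_cast hj j'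
      have := mul_le_mul_of_nonneg_right this hε0.le
      rw [hε, mul_inv_cancel₀ hposR.ne'] at this
      linarith
  have hmem : ∀ x, x ≠ nameVtx a k l e → p x ∈ vertexSet Q := fun x hx => hV ▸ ⟨x, hx, rfl⟩
  have hvne : ∀ i, (.v i : Vtx a b k l) ≠ nameVtx a k l e := by
    rcases e with q | r <;> simp [nameVtx]
  have hwne : ∀ j i, (.w j i : Vtx a b k l) ≠ nameVtx a k l e := by
    rcases e with q | r <;> simp [nameVtx]
  have hone : ∀ o ≠ e, nameVtx a k l o ≠ nameVtx a k l e := by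
    rcases e with q | r <;> rintro (q' | r') h <;> simp_all [nameVtx]
  have hsep : ∀ g : (Fin n → ℝ) →ₗ[ℝ] ℝ, (∀ x ∈ vertexSet Q, f x = 1 → g x = 0) → g = 0 :=
    fun g hg => hp.eq_zero_of_name s he (fun i hi => hg _ (hmem _ (hvne i)) (hv i hi))
      (fun o h => hg _ (hmem _ (hone o h)) (ho o h))
      (fun j i hi => hg _ (hmem _ (hwne j i)) (hw j i hi))
      fun i => hg _ (hmem _ (hwne j i)) (hwj i)
  have hfτ : f (p τ) = 1 := by
    obtain ⟨m, hm⟩ := hQ.integral_of_supporting hn hle hsep _ (hp.lattice τ)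
    rw [hf, hτ] at hm
    rw [hf, hτ]
    rw [hm] at hε0 hε1 ⊢
    have h1 : 0 < m := by exact_mod_cast hε0
    have h2 : m ≤ 1 := by exact_mod_cast hε1
    have : m = 1 := by omega
    simp [this]
  obtain ⟨g, -, hg1, hg⟩ := hQ.exists_dual_of_supporting hn hle hsep (hmem τ hτe) hfτ
  have hg' : ∀ x, x ≠ nameVtx a k l e → f (p x) = 1 → x ≠ τ → g (p x) = 0 := fun x h1 h2 h3 =>
    hg _ (hmem x h1) h2 fun h => h3 (hinj h)
  have hg0 : g = 0 := hp.eq_zero_of_name s he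
    (fun i hi => hg' _ (hvne i) (hv i hi) (by rcases hτo with rfl | rfl <;> simp))
    (fun o h => hg' _ (hone o h) (ho o h) (by
      rcases hτo with rfl | rfl <;> rcases o with q | r <;> simp [nameVtx]))
    (fun j i hi => hg' _ (hwne j i) (hw j i hi) (by rcases hτo with rfl | rfl <;> simp))
    fun i => hg' _ (hwne j i) (hwj i) (by rcases hτo with rfl | rfl <;> simp)
  simp [hg0] at hg1

/-- No vertex of the polytope can be removed. -/
theorem not_removal (hp : Realization α p) (ha : 2 ≤ a) (hb : 1 ≤ b) (hn : 0 < n)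
    (hl : ∀ j, 1 ≤ l j) (hα : ∀ s : Fin b ⊕ Fin b, ∃ j i, α j i = s)
    (hinj : Function.Injective p) (hQ : IsSmoothFano Q) (x : Vtx a b k l)
    (hV : vertexSet Q = p '' {x}ᶜ) : False := by
  cases x with
  | v i => exact hp.not_removal_v ha hQ hV.le
  | y q => exact hp.not_removal_name ha hb hn hα hinj hQ (.inl q) hV
  | z => exact hp.not_removal_z ha hb hQ hV.le
  | t => exact hp.not_removal_t ha hb hn hQ hV
  | u r => exact hp.not_removal_name ha hb hn hα hinj hQ (.inr r) hV
  | w j i => exact hp.not_removal_w hl hQ hV.le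

end Realization

end Removal

section Addition

variable {n a b k : ℕ} {l : Fin k → ℕ} {α : (j : Fin k) → Fin (l j) → Fin b ⊕ Fin b}
  {p : Vtx a b k l → Fin n → ℝ} {Q : Set (Fin n → ℝ)} {w₀ : Fin n → ℝ}

/-- A predicate on choice functions that is insensitive to updates is constant. -/
theorem iff_of_update {ι : Type*} [Finite ι] [DecidableEq ι] {β : ι → Type*}
    {S : ((i : ι) → β i) → Prop} (h : ∀ c i m, S c ↔ S (Function.update c i m))
    (c c' : (i : ι) → β i) : S c ↔ S c' := by
  have := Fintype.ofFinite ι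
  have key : ∀ F : Finset ι, S c ↔ S (F.piecewise c' c) := by
    intro F
    induction F using Finset.induction_on with
    | empty => simp
    | insert i F hi ih => rw [ih, Finset.piecewise_insert]; exact h _ _ _
  simpa using key Finset.univ

namespace Realization

theorem facet_ne_one (hp : Realization α p) (ha : 2 ≤ a) (hn : 0 < n)
    (hQ : IsSmoothFano Q) (hw : w₀ ∉ Set.range p) (hV : vertexSet Q = Set.range p ∪ {w₀})
    (φ : Kind × Idx a b k l) : hp.facet φ w₀ ≠ 1 := by
  intro h1
  have hmem : ∀ x, p x ∈ vertexSet Q := fun x => hV ▸ Or.inl ⟨x, rfl⟩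
  obtain ⟨g, -, hg1, hg⟩ := hQ.exists_dual_of_supporting hn (f := hp.facet φ)
    (s := w₀) (fun x hx => by
      rw [hV] at hx
      obtain ⟨x, rfl⟩ | rfl := hx
      · rw [facet_apply]
        exact (facetVal_spec ha _ _ _).1
      · exact h1.le)
    (fun g hg => hp.eq_zero_of_facet φ.1 φ.2 fun x hx =>
      hg _ (hmem x) ((hp.facet_eq_one_iff ha _ _).2 hx))
    (hV ▸ Or.inr rfl) h1
  have : g = 0 := hp.eq_zero_of_facet φ.1 φ.2 fun x hx =>
    hg _ (hmem x) ((hp.facet_eq_one_iff ha _ _).2 hx) fun h => hw ⟨x, h⟩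
  simp [this] at hg1

/-- Two adjacent facets that are separated by the new vertex `w₀`. -/
theorem wall_of_separated (hp : Realization α p) (ha : 2 ≤ a) (hn : 0 < n)
    (hQ : IsSmoothFano Q) (hw : w₀ ∉ Set.range p) (hV : vertexSet Q = Set.range p ∪ {w₀})
    {φ φ' : Kind × Idx a b k l} {x : Vtx a b k l} (hx' : φ'.1.omits φ'.2 x)
    (hxx : ∀ x', x' ≠ x → ¬ φ.1.omits φ.2 x' → ¬ φ'.1.omits φ'.2 x')
    (hsep : (hp.facet φ w₀ - 1) * (hp.facet φ' w₀ - 1) < 0) :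
    ∃ s : ℝ, 0 < s ∧ s < 1 ∧ (1 - s) * hp.facet φ w₀ + s * hp.facet φ' w₀ = 1 ∧
      (∃ m : ℤ, (1 - s) * hp.facet φ (p x) + s * hp.facet φ' (p x) = m) ∧
      ∃ g : (Fin n → ℝ) →ₗ[ℝ] ℝ, LatticeIntegral g ∧ g w₀ = 1 ∧
        ∀ x', x' ≠ x → ¬ φ.1.omits φ.2 x' → g (p x') = 0 := by
  have hmem : ∀ x, p x ∈ vertexSet Q := fun x => hV ▸ Or.inl ⟨x, rfl⟩
  have hle : ∀ φ x, hp.facet φ (p x) ≤ 1 := fun φ x => by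
    rw [facet_apply]
    exact (facetVal_spec ha _ _ _).1
  set A := hp.facet φ w₀ with hA
  set B := hp.facet φ' w₀ with hB
  have hAB : A - B ≠ 0 := by
    intro h
    rw [sub_eq_zero.1 h] at hsep
    exact absurd hsep (not_lt.2 (mul_self_nonneg _))
  obtain ⟨s, hs0, hs1, hs⟩ : ∃ s : ℝ, 0 < s ∧ s < 1 ∧ (1 - s) * A + s * B = 1 := by
    refine ⟨(A - 1) / (A - B), ?_, ?_, by field_simp; ring⟩
    · rcases mul_neg_iff.1 hsep with ⟨h1, h2⟩ | ⟨h1, h2⟩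
      · exact div_pos h1 (by linarith)
      · exact div_pos_of_neg_of_neg h1 (by linarith)
    · rcases mul_neg_iff.1 hsep with ⟨h1, h2⟩ | ⟨h1, h2⟩
      · rw [div_lt_one (by linarith)]
        linarith
      · rw [div_lt_one_of_neg (by linarith)]
        linarith
  let f := (1 - s) • hp.facet φ + s • hp.facet φ'
  have hf : ∀ y, f y = (1 - s) * hp.facet φ y + s * hp.facet φ' y := fun y => by simp [f]
  have hfle : ∀ y ∈ vertexSet Q, f y ≤ 1 := by
    intro y hy
    rw [hV] at hy
    rw [hf]
    obtain ⟨x, rfl⟩ | rfl := hy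
    · nlinarith [hle φ x, hle φ' x]
    · exact hs.le
  have hfw : f w₀ = 1 := (hf w₀).trans hs
  have hfx : ∀ x', x' ≠ x → ¬ φ.1.omits φ.2 x' → f (p x') = 1 := fun x' h1 h2 => by
    rw [hf, (hp.facet_eq_one_iff ha φ x').2 h2,
      (hp.facet_eq_one_iff ha φ' x').2 (hxx x' h1 h2)]
    ring
  have hd : hp.facet φ' (p x) < 1 := lt_of_le_of_ne (hle _ _) fun h =>
    (hp.facet_eq_one_iff ha _ _).1 h hx'
  have hfsep : ∀ g : (Fin n → ℝ) →ₗ[ℝ] ℝ, (∀ x ∈ vertexSet Q, f x = 1 → g x = 0) → g = 0 := by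
    intro g hg
    by_cases hx : φ.1.omits φ.2 x
    · exact hp.eq_zero_of_facet φ.1 φ.2 fun x' h => by
        have hne : x' ≠ x := fun e => h (e ▸ hx)
        exact hg _ (hmem x') (hfx x' hne h)
    have hφx := (hp.facet_eq_one_iff ha φ x).2 hx
    have hcomb : (1 - hp.facet φ' (p x)) • g - g (p x) • (hp.facet φ - hp.facet φ') = 0 := by
      refine hp.eq_zero_of_facet φ.1 φ.2 fun x' h => ?_
      rcases eq_or_ne x' x with rfl | hne
      · simp only [LinearMap.sub_apply, LinearMap.smul_apply, smul_eq_mul, hφx]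
        ring
      · simp only [LinearMap.sub_apply, LinearMap.smul_apply, smul_eq_mul,
          hg _ (hmem x') (hfx x' hne h), (hp.facet_eq_one_iff ha φ x').2 h,
          (hp.facet_eq_one_iff ha φ' x').2 (hxx x' hne h)]
        ring
    have hgw : g w₀ = 0 := hg _ (hV ▸ Or.inr rfl) hfw
    have h0 := LinearMap.congr_fun hcomb w₀
    simp only [LinearMap.sub_apply, LinearMap.smul_apply, smul_eq_mul, hgw, ← hA, ← hB,
      LinearMap.zero_apply, mul_zero, zero_sub, neg_eq_zero] at h0
    have hgx := (mul_eq_zero.1 h0).resolve_right hAB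
    rw [hgx, zero_smul, sub_zero] at hcomb
    exact (smul_eq_zero.1 hcomb).resolve_left (by linarith)
  obtain ⟨g, hgi, hg1, hg⟩ :=
    hQ.exists_dual_of_supporting hn hfle hfsep (hV ▸ Or.inr rfl) hfw
  refine ⟨s, hs0, hs1, hs, ?_, g, hgi, hg1, fun x' h1 h2 =>
    hg _ (hmem x') (hfx x' h1 h2) fun h => hw ⟨x', h⟩⟩
  obtain ⟨m, hm⟩ := hQ.integral_of_supporting hn hfle hfsep _ (hp.lattice x)
  exact ⟨m, by rw [← hm, hf]⟩

theorem one_lt_facet_iff (hp : Realization α p) (ha : 2 ≤ a) (hn : 0 < n)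
    (hQ : IsSmoothFano Q) (hw : w₀ ∉ Set.range p) (hV : vertexSet Q = Set.range p ∪ {w₀})
    {φ φ' : Kind × Idx a b k l} {x : Vtx a b k l} (hx : ¬ φ.1.omits φ.2 x)
    (hx' : φ'.1.omits φ'.2 x)
    (hxx : ∀ x', x' ≠ x → ¬ φ.1.omits φ.2 x' → ¬ φ'.1.omits φ'.2 x')
    (h0 : facetVal α φ'.1 φ'.2 x = 0) :
    1 < hp.facet φ w₀ ↔ 1 < hp.facet φ' w₀ := by
  have h1 := sub_ne_zero.2 (hp.facet_ne_one ha hn hQ hw hV φ)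
  have h2 := sub_ne_zero.2 (hp.facet_ne_one ha hn hQ hw hV φ')
  have hns : ¬ (hp.facet φ w₀ - 1) * (hp.facet φ' w₀ - 1) < 0 := by
    intro h
    obtain ⟨s, hs0, hs1, -, ⟨m, hm⟩, -⟩ := hp.wall_of_separated ha hn hQ hw hV hx' hxx h
    rw [facet_apply, facet_apply, h0, ← facet_apply hp, (hp.facet_eq_one_iff ha φ x).2 hx] at hm
    have h3 : (0 : ℝ) < m := by linarith
    have h4 : (m : ℝ) < 1 := by linarith
    have h3' : 0 < m := by exact_mod_cast h3
    have h4' : m < 1 := by exact_mod_cast h4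
    omega
  constructor
  · intro h
    by_contra h'
    exact hns (mul_neg_of_pos_of_neg (by linarith) (lt_of_le_of_ne (by linarith) h2))
  · intro h
    by_contra h'
    exact hns (mul_neg_of_neg_of_pos (lt_of_le_of_ne (by linarith) h1) (by linarith))

/-- Facets of type other than `vz` all lie on the same side of the new vertex. -/
theorem exists_side (hp : Realization α p) (ha : 2 ≤ a) (hn : 0 < n)
    (hQ : IsSmoothFano Q) (hw : w₀ ∉ Set.range p) (hV : vertexSet Q = Set.range p ∪ {w₀}) :
    ∃ σ : Prop, ∀ κ ≠ Kind.vz, ∀ s, 1 < hp.facet (κ, s) w₀ ↔ σ := by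
  classical
  have link := fun (φ φ' : Kind × Idx a b k l) x h1 h2 h3 h4 =>
    hp.one_lt_facet_iff ha hn hQ hw hV (φ := φ) (φ' := φ') (x := x) h1 h2 h3 h4
  have hzu : ∀ s, 1 < hp.facet (.yu, s) w₀ ↔ 1 < hp.facet (.zu, s) w₀ := fun s =>
    link (.yu, s) (.zu, s) (.y s.q) (by simp [Kind.omits]) (by simp [Kind.omits])
      (fun x' => by cases x' <;> simp +contextual [Kind.omits])
      (by simp [facetVal, fval_y, Kind.Y])
  have hyt : ∀ s, 1 < hp.facet (.yu, s) w₀ ↔ 1 < hp.facet (.yt, s) w₀ := fun s =>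
    link (.yu, s) (.yt, s) (.u s.r) (by simp [Kind.omits]) (by simp [Kind.omits])
      (fun x' => by cases x' <;> simp +contextual [Kind.omits])
      (by simp [facetVal, fval_u, Kind.Y, Kind.T])
  have hvt : ∀ s, 1 < hp.facet (.yt, s) w₀ ↔ 1 < hp.facet (.vt, s) w₀ := fun s =>
    link (.yt, s) (.vt, s) (.y s.q) (by simp [Kind.omits]) (by simp [Kind.omits])
      (fun x' => by cases x' <;> simp +contextual [Kind.omits])
      (by simp [facetVal, fval_y, Kind.Y])
  have hi : ∀ s i, 1 < hp.facet (.yt, s) w₀ ↔ 1 < hp.facet (.yt, { s with i := i }) w₀ := by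
    intro s i
    rcases eq_or_ne i s.i with rfl | h
    · rfl
    · exact link (.yt, s) (.yt, { s with i := i }) (.v i) (by simpa [Kind.omits] using h)
        (by simp [Kind.omits])
        (fun x' => by cases x' <;> simp +contextual [Kind.omits])
        (by simp [facetVal, fval_v, Kind.Y, Kind.T])
  have hc : ∀ s j m, 1 < hp.facet (.yu, s) w₀ ↔
      1 < hp.facet (.yu, { s with c := Function.update s.c j m }) w₀ := by
    intro s j m
    rcases eq_or_ne m (s.c j) with rfl | h
    · rw [Function.update_eq_self]
    · refine link (.yu, s) (.yu, { s with c := Function.update s.c j m }) (.w j m)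
        (by simpa [Kind.omits] using h)
        (by simp [Kind.omits])
        (fun x' => ?_) ?_
      · cases x' with
        | w j' i' =>
          rcases eq_or_ne j' j with rfl | hj
          · simp +contextual [Kind.omits]
          · simp [Kind.omits, Function.update_of_ne hj]
        | _ => simp [Kind.omits]
      · have : ∀ o, nameVal (fval α 0 1 { s with c := Function.update s.c j m }) o = 1 := by
          rintro (q | r) <;> simp [nameVal, fval_y, fval_u]
        simp [facetVal, fval_w, Kind.Y, Kind.T, this]
  have hqr : ∀ s q r, hp.facet (.yu, s) = hp.facet (.yu, { s with q := q, r := r }) := by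
    intro s q r
    refine sub_eq_zero.1 (hp.sep _ fun x => ?_)
    rw [LinearMap.sub_apply, facet_apply, facet_apply]
    simp [facetVal, fval, shift, Kind.Y, Kind.T]
  have hyu : ∀ s s', 1 < hp.facet (.yu, s) w₀ ↔ 1 < hp.facet (.yu, s') w₀ := by
    intro s s'
    rw [hyt, hi s s'.i, ← hyt, hqr _ s'.q s'.r]
    exact iff_of_update (S := fun c => 1 < hp.facet (.yu, (⟨s'.i, s'.q, s'.r, c⟩ : Idx a b k l)) w₀)
      (fun c j m => hc ⟨s'.i, s'.q, s'.r, c⟩ j m) s.c s'.c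
  by_cases hne : Nonempty (Idx a b k l)
  · obtain ⟨s₀⟩ := hne
    refine ⟨1 < hp.facet (.yu, s₀) w₀, fun κ hκ s => ?_⟩
    cases κ with
    | yu => exact hyu _ _
    | vz => exact absurd rfl hκ
    | yt => rw [← hyt]; exact hyu _ _
    | zu => rw [← hzu]; exact hyu _ _
    | vt => rw [← hvt, ← hyt]; exact hyu _ _
  · exact ⟨True, fun κ hκ s => absurd ⟨s⟩ hne⟩

theorem facet_eq_one (hp : Realization α p) (ha : 2 ≤ a) {κ : Kind} {s : Idx a b k l}
    {x : Vtx a b k l} (h : ¬ κ.omits s x) : hp.facet (κ, s) (p x) = 1 :=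
  (hp.facet_eq_one_iff ha (κ, s) x).2 h

theorem facet_vt_z (hp : Realization α p) (s : Idx a b k l) :
    hp.facet (.vt, s) (p .z) = -1 := by
  rw [facet_apply, facetVal, fval_z]
  simp [Kind.T]

theorem not_omits_vt {s : Idx a b k l} (x : Vtx a b k l) (hx : x ≠ .z)
    (h : ¬ Kind.omits .vz s x) : ¬ Kind.omits .vt s x := by
  cases x <;> simp_all [Kind.omits]

theorem not_omits_zu {s : Idx a b k l} {i : Fin a} (x : Vtx a b k l) (hx : x ≠ .v i)
    (h : ¬ Kind.omits .vz s x) : ¬ Kind.omits .zu { s with i := i } x := by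
  cases x <;> simp_all [Kind.omits]

/-- The wall opposite to `z`, if it separates the new vertex. -/
theorem wall_z_of_separated (hp : Realization α p) (ha : 2 ≤ a) (hn : 0 < n)
    (hQ : IsSmoothFano Q) (hw : w₀ ∉ Set.range p) (hV : vertexSet Q = Set.range p ∪ {w₀})
    (s : Idx a b k l) (h : (hp.facet (.vz, s) w₀ - 1) * (hp.facet (.vt, s) w₀ - 1) < 0) :
    hp.facet (.vz, s) w₀ + hp.facet (.vt, s) w₀ = 2 ∧
      ∃ g : (Fin n → ℝ) →ₗ[ℝ] ℝ, LatticeIntegral g ∧ g w₀ = 1 ∧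
        ∀ x', x' ≠ .z → ¬ Kind.omits .vz s x' → g (p x') = 0 := by
  obtain ⟨r, hr0, hr1, hr, ⟨m, hm⟩, hg⟩ := hp.wall_of_separated ha hn hQ hw hV
    (φ := (.vz, s)) (φ' := (.vt, s)) (x := .z) (by simp [Kind.omits]) not_omits_vt h
  refine ⟨?_, hg⟩
  rw [hp.facet_eq_one ha (by simp [Kind.omits]), facet_vt_z] at hm
  have h1 : (-1 : ℝ) < m := by linarith
  have h2 : (m : ℝ) < 1 := by linarith
  have h1' : -1 < m := by exact_mod_cast h1
  have h2' : m < 1 := by exact_mod_cast h2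
  obtain rfl : m = 0 := by omega
  rw [Int.cast_zero] at hm
  obtain rfl : r = 1 / 2 := by linarith
  linarith

theorem facet_vt_sum (hp : Realization α p) (ha : 2 ≤ a) (s : Idx a b k l)
    {c : Vtx a b k l → ℝ} (hc : ∀ x, hp.facet (.vz, s) (p x) ≠ 1 → c x = 0) :
    hp.facet (.vt, s) (∑ x, c x • p x) = ∑ x, c x - 2 * c .z := by
  classical
  have h2 : 2 * c .z = ∑ x, if x = .z then 2 * c x else 0 := by simp
  rw [map_sum, eq_sub_iff_add_eq, h2, ← Finset.sum_add_distrib]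
  refine Finset.sum_congr rfl fun x _ => ?_
  rw [map_smul, smul_eq_mul]
  by_cases hx : Kind.omits .vz s x
  · simp [hc x fun h => (hp.facet_eq_one_iff ha _ x).1 h hx]
  · split_ifs with h
    · subst h
      rw [facet_vt_z]
      ring
    · rw [hp.facet_eq_one ha (not_omits_vt x h hx)]
      ring

/-- No lattice point can be added as a vertex. -/
theorem not_addition (hp : Realization α p) (ha : 2 ≤ a) (hb : 1 ≤ b) (hn : 0 < n)
    (hl : ∀ j, 1 ≤ l j) (hQ : IsSmoothFano Q) (hlat : IsLatticePoint w₀)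
    (hw : w₀ ∉ Set.range p) (hV : vertexSet Q = Set.range p ∪ {w₀}) : False := by
  obtain ⟨σ, hσ⟩ := hp.exists_side ha hn hQ hw hV
  have hS := hp.facetSystem ha hb hl
  have := nonempty_facets k l ha hb
  have hw0 : w₀ ≠ 0 := by
    rintro rfl
    exact hQ.zero_notMem_vertexSet hn (hV ▸ Or.inr rfl)
  have hpos : ∀ c : Vtx a b k l → ℝ, (∀ x, 0 ≤ c x) → ∑ x, c x • p x ≠ 0 → 0 < ∑ x, c x := by
    intro c hc h
    refine lt_of_le_of_ne (Finset.sum_nonneg fun x _ => hc x) fun h0 => h ?_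
    have := (Finset.sum_eq_zero_iff_of_nonneg fun x _ => hc x).1 h0.symm
    exact Finset.sum_eq_zero fun x hx => by rw [this x hx, zero_smul]
  have hval : ∀ (f : (Fin n → ℝ) →ₗ[ℝ] ℝ) (c : Vtx a b k l → ℝ),
      f (∑ x, c x • p x) = ∑ x, c x * f (p x) := fun f c => by
    simp [map_sum]
  by_cases hσ' : σ
  · obtain ⟨⟨κ, s⟩, c, hc, hc0, hcx, hcf, hci⟩ := hS.exists_mem_cone (-w₀)
    have hci := hci fun i => by
      obtain ⟨m, hm⟩ := hlat i
      exact ⟨-m, by simp [hm]⟩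
    have hcp := hpos c hc (by rwa [hcx, neg_ne_zero])
    rw [map_neg] at hcf
    have hκ : κ = .vz := by
      by_contra h
      have := (hσ κ h s).2 hσ'
      linarith
    subst hκ
    have hvt := (hσ .vt (by simp) s).2 hσ'
    obtain ⟨h2, g, hgi, hg1, hg0⟩ := hp.wall_z_of_separated ha hn hQ hw hV s
      (mul_neg_of_neg_of_pos (by linarith) (by linarith))
    have hv := hp.facet_vt_sum ha s hc0
    rw [hcx, map_neg] at hv
    have hgz : g (-w₀) = c .z * g (p .z) := by
      rw [← hcx, hval]
      refine Finset.sum_eq_single _ (fun x _ hx => ?_) (by simp)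
      by_cases hx' : Kind.omits .vz s x
      · rw [hc0 x fun h => (hp.facet_eq_one_iff ha _ x).1 h hx', zero_mul]
      · rw [hg0 x hx hx', mul_zero]
    rw [map_neg, hg1] at hgz
    obtain ⟨m, hm⟩ := hci .z
    obtain ⟨m', hm'⟩ := hgi _ (hp.lattice .z)
    rw [hm, hm'] at hgz
    have hmm : m * m' = -1 := by exact_mod_cast hgz.symm
    have hcz : c .z ≤ ∑ x, c x := Finset.single_le_sum (fun x _ => hc x) (Finset.mem_univ _)
    have hm0 : 0 ≤ m := by exact_mod_cast hm ▸ hc .z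
    obtain rfl : m = 1 := by
      rcases Int.isUnit_iff.1 (IsUnit.of_mul_eq_one (a := m) (-m') (by linarith)) with h | h
      · exact h
      · omega
    rw [hm] at hcz hv
    push_cast at hcz hv
    linarith
  · obtain ⟨⟨κ, s⟩, c, hc, hc0, hcx, hcf, hci⟩ := hS.exists_mem_cone w₀
    have hci := hci hlat
    have hcp := hpos c hc (by rwa [hcx])
    choose m hm using hci
    have hlarge : 1 < hp.facet (κ, s) w₀ := by
      refine lt_of_le_of_ne ?_ (hp.facet_ne_one ha hn hQ hw hV _).symm
      rw [hcf] at *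
      simp only [hm] at hcp ⊢
      exact_mod_cast hcp
    have hκ : κ = .vz := by
      by_contra h
      exact hσ' ((hσ κ h s).1 hlarge)
    subst hκ
    have hvt : hp.facet (.vt, s) w₀ < 1 := lt_of_le_of_ne
      (not_lt.1 fun h => hσ' ((hσ .vt (by simp) s).1 h)) (hp.facet_ne_one ha hn hQ hw hV _)
    obtain ⟨h2, -⟩ := hp.wall_z_of_separated ha hn hQ hw hV s
      (mul_neg_of_pos_of_neg (by linarith) (by linarith))
    have hv := hp.facet_vt_sum ha s hc0
    rw [hcx] at hv
    have hcv : ∀ i, 1 ≤ c (.v i) := by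
      intro i
      have hne : c (.v i) ≠ 0 := by
        intro h0
        refine hσ' ((hσ .zu (by simp) { s with i := i }).1 (lt_of_lt_of_eq hlarge ?_))
        rw [← hcx, hval, hval]
        refine Finset.sum_congr rfl fun x _ => ?_
        by_cases hx : Kind.omits .vz s x
        · simp [hc0 x fun h => (hp.facet_eq_one_iff ha _ x).1 h hx]
        · rcases eq_or_ne x (.v i) with rfl | hxi
          · simp [h0]
          · rw [hp.facet_eq_one ha hx, hp.facet_eq_one ha (not_omits_zu x hxi hx)]
      have := lt_of_le_of_ne (hc (.v i)) hne.symm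
      rw [hm] at this ⊢
      exact_mod_cast this
    classical
    have hsum := Finset.sum_le_univ_sum_of_nonneg hc
      (s := {.z, .v ⟨0, by omega⟩, .v ⟨1, by omega⟩})
    rw [Finset.sum_insert (by simp), Finset.sum_insert (by simp), Finset.sum_singleton] at hsum
    have h0 := hcv ⟨0, by omega⟩
    have h1 := hcv ⟨1, by omega⟩
    linarith

end Realization

end Addition

section Circuits

theorem FacetSystem.isPrimitiveCollection_image_iff {n : ℕ} {I Φ : Type*} [Fintype I] [Finite Φ]
    [Nonempty Φ] {p : I → Fin n → ℝ} {f : Φ → (Fin n → ℝ) →ₗ[ℝ] ℝ} (h : FacetSystem p f)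
    (hn : 0 < n) {A : Set I} :
    IsPrimitiveCollection (convexHull ℝ (Set.range p)) (p '' A) ↔
      A ≠ Set.univ ∧ (¬ ∃ φ, ∀ i ∈ A, f φ (p i) = 1) ∧
        ∀ x ∈ A, ∃ φ, ∀ i ∈ A \ {x}, f φ (p i) = 1 := by
  have hface : ∀ A ≠ Set.univ, IsFaceOf (convexHull ℝ (p '' A)) (convexHull ℝ (Set.range p)) ↔
      ∃ φ, ∀ i ∈ A, f φ (p i) = 1 := fun A hA =>
    ⟨h.exists_facet_of_isFaceOf hn hA, fun ⟨φ, hφ⟩ => h.isFaceOf_of_subset hφ⟩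
  have hdiff : ∀ x, p '' A \ {p x} = p '' (A \ {x}) := fun x => by
    rw [← Set.image_singleton, ← Set.image_sdiff h.injective]
  have hne : ∀ x, A \ {x} ≠ Set.univ := fun x hx => (hx.symm ▸ Set.mem_univ x : x ∈ A \ {x}).2 rfl
  rw [IsPrimitiveCollection, h.vertexSet_eq]
  constructor
  · rintro ⟨-, -, h1, h2⟩
    have hA : A ≠ Set.univ := by
      rintro rfl
      rw [Set.image_univ] at h1
      exact h1 (IsExposed.refl _)
    exact ⟨hA, fun h' => h1 ((hface A hA).2 h'), fun x hx =>
      (hface _ (hne x)).1 (hdiff x ▸ h2 _ ⟨x, hx, rfl⟩)⟩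
  · rintro ⟨hA, h1, h2⟩
    refine ⟨?_, Set.image_subset_range _ _, fun h' => h1 ((hface A hA).1 h'), ?_⟩
    · rw [Set.image_nonempty, Set.nonempty_iff_ne_empty]
      rintro rfl
      exact h1 ⟨Classical.arbitrary Φ, by simp⟩
    · rintro _ ⟨x, hx, rfl⟩
      rw [hdiff]
      exact (hface _ (hne x)).2 (h2 x hx)

variable {n a b k : ℕ} {l : Fin k → ℕ}

/-- The minimal sets of labels not contained in a facet. -/
inductive IsCircuit : Set (Vtx a b k l) → Prop
  | vy : IsCircuit (Set.range .v ∪ Set.range .y)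
  | yz : IsCircuit (Set.range .y ∪ {.z})
  | zt : IsCircuit {.z, .t}
  | tu : IsCircuit (insert .t (Set.range .u))
  | uv : IsCircuit (Set.range .u ∪ Set.range .v)
  | w (j : Fin k) : IsCircuit (Set.range (.w j))

theorem Kind.exists_subset_iff_isCircuit (ha : 0 < a) (hb : 0 < b) (A : Set (Vtx a b k l)) :
    (∃ κ : Kind, ∃ s : Idx a b k l, ∀ x ∈ A, ¬ κ.omits s x) ↔ ∀ C, IsCircuit C → ¬ C ⊆ A := by
  have hv : Set.range (.v : Fin a → Vtx a b k l) ⊆ A ↔ ¬ ∃ i, .v i ∉ A := by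
    simp [Set.range_subset_iff]
  have hy : Set.range (.y : Fin b → Vtx a b k l) ⊆ A ↔ ¬ ∃ i, .y i ∉ A := by
    simp [Set.range_subset_iff]
  have hu : Set.range (.u : Fin b → Vtx a b k l) ⊆ A ↔ ¬ ∃ i, .u i ∉ A := by
    simp [Set.range_subset_iff]
  rw [Kind.exists_subset_iff]
  constructor
  · rintro ⟨-, hw, h1, h2, h3, h4, h5⟩ C hC
    cases hC with
    | w j =>
      obtain ⟨i, hi⟩ := hw j
      exact fun h => hi (h ⟨i, rfl⟩)
    | vy =>
      rw [Set.union_subset_iff, hv, hy, ← not_or, not_not]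
      exact h1
    | yz =>
      rw [Set.union_subset_iff, hy, Set.singleton_subset_iff, not_and_or, not_not]
      exact h2
    | zt =>
      rw [Set.insert_subset_iff, Set.singleton_subset_iff, not_and_or]
      exact h3
    | tu =>
      rw [Set.insert_subset_iff, hu, not_and_or, not_not]
      exact h4
    | uv =>
      rw [Set.union_subset_iff, hu, hv, ← not_or, not_not]
      exact h5
  · intro h
    have h1 := h _ .vy
    have h2 := h _ .yz
    have h3 := h _ .zt
    have h4 := h _ .tu
    have h5 := h _ .uv
    rw [Set.union_subset_iff, hv, hy, ← not_or, not_not] at h1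
    rw [Set.union_subset_iff, hy, Set.singleton_subset_iff, not_and_or, not_not] at h2
    rw [Set.insert_subset_iff, Set.singleton_subset_iff, not_and_or] at h3
    rw [Set.insert_subset_iff, hu, not_and_or, not_not] at h4
    rw [Set.union_subset_iff, hu, hv, ← not_or, not_not] at h5
    refine ⟨⟨ha, hb⟩, fun j => ?_, h1, h2, h3, h4, h5⟩
    have := h _ (.w j)
    rwa [Set.range_subset_iff, not_forall] at this

theorem IsCircuit.eq_of_subset (ha : 0 < a) (hb : 0 < b) {C C' : Set (Vtx a b k l)}
    (hC : IsCircuit C) (hC' : IsCircuit C') (h : C ⊆ C') : C = C' := by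
  have hv := @h (.v ⟨0, ha⟩)
  have hy := @h (.y ⟨0, hb⟩)
  have hz := @h .z
  have ht := @h .t
  have hu := @h (.u ⟨0, hb⟩)
  have hw := fun j => @h (.w j 0)
  cases hC with
  | w j =>
    replace hw := hw j
    cases hC' <;> simp at hw
    obtain ⟨rfl, -⟩ := hw
    rfl
  | _ => cases hC' <;> first | rfl | simp at hv hy hz ht hu

theorem IsCircuit.ne_univ (ha : 0 < a) (hb : 0 < b) {C : Set (Vtx a b k l)} (hC : IsCircuit C) :
    C ≠ Set.univ := by
  rintro rfl
  have h := IsCircuit.zt.eq_of_subset ha hb hC (Set.subset_univ _)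
  have : (.v ⟨0, ha⟩ : Vtx a b k l) ∈ ({.z, .t} : Set (Vtx a b k l)) := h ▸ Set.mem_univ _
  simp at this

theorem Realization.isPrimitiveCollection_iff {α : (j : Fin k) → Fin (l j) → Fin b ⊕ Fin b}
    {p : Vtx a b k l → Fin n → ℝ} (hp : Realization α p) (ha : 2 ≤ a) (hb : 1 ≤ b) (hn : 0 < n)
    (hl : ∀ j, 1 ≤ l j) {B : Set (Fin n → ℝ)} :
    IsPrimitiveCollection (convexHull ℝ (Set.range p)) B ↔ ∃ C, IsCircuit C ∧ B = p '' C := by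
  have hS := hp.facetSystem ha hb hl
  have := nonempty_facets k l ha hb
  have ha0 : 0 < a := by omega
  have hiff : ∀ A : Set (Vtx a b k l), IsPrimitiveCollection (convexHull ℝ (Set.range p)) (p '' A) ↔
      IsCircuit A := by
    intro A
    simp only [hS.isPrimitiveCollection_image_iff hn, hp.facet_eq_one_iff ha, Prod.exists,
      Kind.exists_subset_iff_isCircuit ha0 hb]
    constructor
    · rintro ⟨-, h1, h2⟩
      push Not at h1
      obtain ⟨C, hC, hCA⟩ := h1
      have : C = A := by
        by_contra hne
        obtain ⟨x, hx, hxC⟩ := Set.exists_of_ssubset (hCA.ssubset_of_ne hne)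
        exact h2 x hx C hC fun y hy => ⟨hCA hy, fun h => hxC (h ▸ hy)⟩
      exact this ▸ hC
    · intro hA
      refine ⟨hA.ne_univ ha0 hb, fun h => h A hA subset_rfl, fun x hx C hC h => ?_⟩
      have := hC.eq_of_subset ha0 hb hA (h.trans Set.sdiff_subset)
      subst this
      exact (h hx).2 rfl
  constructor
  · intro h
    have hB := h.2.1
    rw [hS.vertexSet_eq] at hB
    obtain ⟨A, rfl⟩ := Set.subset_range_iff_exists_image_eq.1 hB
    exact ⟨A, (hiff A).1 h, rfl⟩
  · rintro ⟨C, hC, rfl⟩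
    exact (hiff C).2 hC

theorem Realization.hasGeneralStructure {α : (j : Fin k) → Fin (l j) → Fin b ⊕ Fin b}
    {p : Vtx a b k l → Fin n → ℝ} (hp : Realization α p) (ha : 2 ≤ a) (hb : 1 ≤ b) (hn : 0 < n)
    (hl : ∀ j, 1 ≤ l j) :
    HasGeneralStructure (convexHull ℝ (Set.range p)) a b k l (fun i => p (.v i))
      (fun q => p (.y q)) (p .z) (p .t) (fun r => p (.u r)) (fun j i => p (.w j i))
      (fun j i => Sum.elim (fun q => p (.y q)) (fun r => p (.u r)) (α j i)) := by
  have hrel : ∀ m, VtxRel α fun x => p x m := fun m => hp.rel (LinearMap.proj m)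
  have hS := hp.facetSystem ha hb hl
  refine ⟨?_, fun B => ?_, ?_, ?_, ?_, ?_, ?_, fun j => ?_⟩
  · rw [hS.vertexSet_eq]
    ext x
    simp only [Set.mem_union, Set.mem_range, Set.mem_insert_iff, Set.mem_singleton_iff,
      Set.mem_iUnion]
    constructor
    · rintro ⟨x | x | _ | _ | x | ⟨j, x⟩, rfl⟩
      · exact .inl (.inl (.inl (.inl ⟨x, rfl⟩)))
      · exact .inl (.inl (.inl (.inr ⟨x, rfl⟩)))
      · exact .inl (.inl (.inr (.inl rfl)))
      · exact .inl (.inl (.inr (.inr rfl)))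
      · exact .inl (.inr ⟨x, rfl⟩)
      · exact .inr ⟨j, x, rfl⟩
    · rintro ((((⟨i, rfl⟩ | ⟨i, rfl⟩) | rfl | rfl) | ⟨i, rfl⟩) | ⟨j, i, rfl⟩) <;> exact ⟨_, rfl⟩
  · have himg : ∀ {ι : Type} (f : ι → Vtx a b k l), p '' Set.range f =
        Set.range fun i => p (f i) := fun f => (Set.range_comp p f).symm
    rw [hp.isPrimitiveCollection_iff ha hb hn hl]
    constructor
    · rintro ⟨C, hC, rfl⟩
      cases hC <;> simp only [Set.image_union, himg, Set.image_insert_eq, Set.image_singleton,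
        true_or, or_true]
      exact .inr (.inr (.inr (.inr (.inr ⟨_, rfl⟩))))
    · rintro (rfl | rfl | rfl | rfl | rfl | ⟨j, rfl⟩)
      · exact ⟨_, .vy, by rw [Set.image_union, himg, himg]⟩
      · exact ⟨_, .yz, by rw [Set.image_union, himg, Set.image_singleton]⟩
      · exact ⟨_, .zt, by rw [Set.image_insert_eq, Set.image_singleton]⟩
      · exact ⟨_, .tu, by rw [Set.image_insert_eq, himg]⟩
      · exact ⟨_, .uv, by rw [Set.image_union, himg, himg]⟩
      · exact ⟨_, .w j, (himg _).symm⟩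
  all_goals
    ext m
    simp only [Pi.add_apply, Finset.sum_apply, Pi.smul_apply, smul_eq_mul, Pi.zero_apply]
  · exact (hrel m).vy
  · exact (hrel m).yz
  · exact (hrel m).zt
  · linarith [(hrel m).yz, (hrel m).zt]
  · linarith [(hrel m).vy, (hrel m).yz, (hrel m).zt]
  · rw [(hrel m).w j]
    refine Finset.sum_congr rfl fun i _ => ?_
    rcases α j i with q | r <;> rfl

end Circuits

section Isolation

variable {n a b k : ℕ} {l : Fin k → ℕ} {α : (j : Fin k) → Fin (l j) → Fin b ⊕ Fin b}
  {p : Vtx a b k l → Fin n → ℝ} {Q : Set (Fin n → ℝ)}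

theorem bijective_linear_of_image_lattice {φ : (Fin n → ℝ) →ᵃ[ℝ] Fin n → ℝ}
    (h : φ '' {x | IsLatticePoint x} = {x | IsLatticePoint x}) :
    Function.Bijective φ.linear := by
  have hsurj : Function.Surjective φ.linear := by
    obtain ⟨x₀, -, h0⟩ := h.ge (isLatticePoint_zero (n := n))
    choose x hx hxi using fun i => h.ge (isLatticePoint_single (n := n) i)
    intro y
    refine ⟨∑ i, y i • (x i - x₀), ?_⟩
    simp only [map_sum, map_smul]
    have : ∀ i, φ.linear (x i - x₀) = Pi.single i 1 := fun i => by
      rw [← vsub_eq_sub, AffineMap.linearMap_vsub, hxi, h0, vsub_eq_sub, sub_zero]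
    simp only [this]
    ext m
    simp [Finset.sum_apply, Pi.single_apply]
  exact ⟨LinearMap.injective_iff_surjective.2 hsurj, hsurj⟩

/-- A unimodular equivalence between polytopes having the origin as only interior lattice point
is linear. -/
theorem exists_linearEquiv_of_unimodularEquiv {P : Set (Fin n → ℝ)}
    (hP : ∀ x, IsLatticePoint x → x ∈ interior P → x = 0) (hQ : (0 : Fin n → ℝ) ∈ interior Q)
    (h : UnimodularEquiv P Q) : ∃ L : (Fin n → ℝ) ≃ₗ[ℝ] Fin n → ℝ,
      L '' {x | IsLatticePoint x} = {x | IsLatticePoint x} ∧ L '' P = Q := by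
  obtain ⟨φ, hφ, hφP⟩ := h
  have hbij := bijective_linear_of_image_lattice hφ
  have hinj : Function.Injective φ := φ.linear_injective_iff.1 hbij.1
  obtain ⟨x₀, hx₀, h0⟩ := hφ.ge (isLatticePoint_zero (n := n))
  have hx : x₀ ∈ interior P := by
    refine mem_interior.2 ⟨φ ⁻¹' interior Q, fun y hy => ?_,
      isOpen_interior.preimage φ.continuous_of_finiteDimensional, ?_⟩
    · obtain ⟨z, hz, hzy⟩ := hφP.ge (interior_subset hy)
      exact hinj hzy ▸ hz
    · rwa [Set.mem_preimage, h0]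
  obtain rfl := hP x₀ hx₀ hx
  have hL : ⇑(LinearEquiv.ofBijective φ.linear hbij) = φ := by
    ext1 x
    rw [LinearEquiv.ofBijective_apply, AffineMap.decomp' φ, h0]
    simp
  exact ⟨LinearEquiv.ofBijective φ.linear hbij, by rw [hL, hφ], by rw [hL, hφP]⟩

namespace Realization

theorem comp (hp : Realization α p) (L : (Fin n → ℝ) ≃ₗ[ℝ] Fin n → ℝ)
    (hL : L '' {x | IsLatticePoint x} = {x | IsLatticePoint x}) :
    Realization α fun x => L (p x) where
  lattice x := hL.le ⟨p x, hp.lattice x, rfl⟩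
  rel f := hp.rel (f.comp L.toLinearMap)
  ext ψ hψ := by
    obtain ⟨f, hf⟩ := hp.ext ψ hψ
    exact ⟨f.comp L.symm.toLinearMap, fun x => by simp [hf]⟩
  sep f hf := by
    have h := hp.sep (f.comp L.toLinearMap) hf
    refine LinearMap.ext fun x => ?_
    simpa using LinearMap.congr_fun h (L.symm x)
  int f hf y hy := by
    obtain ⟨x, hx, rfl⟩ := hL.ge hy
    exact hp.int (f.comp L.toLinearMap) hf x hx

theorem not_iStep (hp : Realization α p) (ha : 2 ≤ a) (hb : 1 ≤ b) (hn : 0 < n)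
    (hl : ∀ j, 1 ≤ l j) (hα : ∀ s : Fin b ⊕ Fin b, ∃ j i, α j i = s) (hQ : IsSmoothFano Q) :
    ¬ IStep Q (convexHull ℝ (Set.range p)) := by
  have hS := hp.facetSystem ha hb hl
  rw [IStep, hS.vertexSet_eq]
  rintro (⟨w, -, hw, hV⟩ | ⟨w, hlat, hw, hV⟩)
  · obtain ⟨x, rfl⟩ := hV.ge (Or.inr rfl)
    refine hp.not_removal ha hb hn hl hα hS.injective hQ x ?_
    rw [Set.image_compl_eq_range_sdiff_image hS.injective, Set.image_singleton, hV,
      Set.union_sdiff_cancel_right]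
    rintro y ⟨hy, rfl⟩
    exact hw hy
  · exact hp.not_addition ha hb hn hl hQ hlat hw hV

theorem iIsolated (hp : Realization α p) (ha : 2 ≤ a) (hb : 1 ≤ b) (hn : 0 < n)
    (hl : ∀ j, 1 ≤ l j) (hα : ∀ s : Fin b ⊕ Fin b, ∃ j i, α j i = s) :
    IIsolated (convexHull ℝ (Set.range p)) := by
  rintro Q - ⟨m, c, hc, ⟨φ, hφ, hφQ⟩, hPc, hstep⟩
  have hS := hp.facetSystem ha hb hl
  have := nonempty_facets k l ha hb
  obtain ⟨L, hL, hLP⟩ := exists_linearEquiv_of_unimodularEquiv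
    (fun x hx => hS.eq_zero_of_mem_interior hx) (hc (Fin.last m)).2.1 hPc
  cases m with
  | zero =>
    refine ⟨L.symm.toLinearMap.toAffineMap.comp φ, ?_, ?_⟩
    · simp only [AffineMap.coe_comp, LinearMap.coe_toAffineMap, LinearEquiv.coe_coe,
        Set.image_comp, hφ]
      conv_lhs => rw [← hL]
      exact L.symm_image_image _
    · simp only [AffineMap.coe_comp, LinearMap.coe_toAffineMap, LinearEquiv.coe_coe,
        Set.image_comp, hφQ]
      exact hLP ▸ L.symm_image_image _
  | succ m =>
    refine absurd ?_ ((hp.comp L hL).not_iStep ha hb hn hl hα (hc (Fin.last m).castSucc))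
    have : convexHull ℝ (Set.range fun x => L (p x)) = c (Fin.last m).succ := by
      rw [Fin.succ_last, ← hLP]
      exact (congrArg _ (Set.range_comp L p)).trans (L.toLinearMap.image_convexHull _).symm
    exact this ▸ hstep (Fin.last m)

end Realization

theorem IIsolated.fIsolated {P : Set (Fin n → ℝ)} (h : IIsolated P) : FIsolated P := by
  rintro Q hQ ⟨m, c, hc, h0, h1, hstep⟩
  refine h Q hQ ⟨m, c, hc, h0, h1, fun i => ?_⟩
  rcases hstep i with ⟨w, h1, h2, h3, -⟩ | ⟨w, h1, h2, h3, -⟩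
  · exact .inl ⟨w, h1, h2, h3⟩
  · exact .inr ⟨w, h1, h2, h3⟩

end Isolation

/-- For `a ≥ 2`, `b ≥ 1`, `k ≥ 1`, `l_1, …, l_k ≥ 1` and an
assignment `α` of names of elements of `{y_1, …, y_b, u_1, …, u_b}` (where
`Sum.inl q` names `y_{q+1}` and `Sum.inr q` names `u_{q+1}`) whose set of
values is exactly all of `{y_q, u_q : 1 ≤ q ≤ b}`, there is an I-isolated
(in particular F-isolated) smooth Fano polytope `P` of dimension
`n = a + 2b - 1 + ∑ l_j` with `n + k + 3` vertices whose primitive relations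
are exactly those listed in Theorem `general`. -/
theorem exists_I_isolated_with_general_structure (a b k : ℕ) (l : Fin k → ℕ)
    (ha : 2 ≤ a) (hb : 1 ≤ b) (hk : 1 ≤ k) (hl : ∀ j, 1 ≤ l j)
    (α : (j : Fin k) → Fin (l j) → (Fin b ⊕ Fin b))
    (hα : ∀ s : Fin b ⊕ Fin b, ∃ j i, α j i = s) :
    ∃ P : Set (Fin (a + 2 * b - 1 + ∑ j, l j) → ℝ),
      IsSmoothFano P ∧ IIsolated P ∧ FIsolated P ∧
      (vertexSet P).ncard = (a + 2 * b - 1 + ∑ j, l j) + k + 3 ∧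
      ∃ (v : Fin a → Fin (a + 2 * b - 1 + ∑ j, l j) → ℝ)
        (y : Fin b → Fin (a + 2 * b - 1 + ∑ j, l j) → ℝ)
        (z t : Fin (a + 2 * b - 1 + ∑ j, l j) → ℝ)
        (u : Fin b → Fin (a + 2 * b - 1 + ∑ j, l j) → ℝ)
        (w : (j : Fin k) → Fin (l j + 1) → Fin (a + 2 * b - 1 + ∑ j, l j) → ℝ),
        HasGeneralStructure P a b k l v y z t u w
          (fun j i => Sum.elim y u (α j i)) := by
  have hn : 0 < a + 2 * b - 1 + ∑ j, l j := by omega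
  obtain ⟨p, hp⟩ := exists_realization α ha hb rfl
  have hS := hp.facetSystem ha hb hl
  have := nonempty_facets k l ha hb
  have hI := hp.iIsolated ha hb hn hl hα
  refine ⟨convexHull ℝ (Set.range p), hS.isSmoothFano (by omega), hI, hI.fIsolated, ?_,
    _, _, _, _, _, _, hp.hasGeneralStructure ha hb hn hl⟩
  rw [hS.vertexSet_eq, ← Set.image_univ, Set.ncard_image_of_injective _ hS.injective,
    Set.ncard_univ, Nat.card_eq_fintype_card, Vtx.card_eq]
  omega
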